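/- arXiv:2510.06613 — 2 statements merged into one kernel-verified Lean document; each statement's English description precedes it below -/
import Mathlib

section
/- Let n ≥ 5 be an integer and let p ≥ 1 and q ≥ 1 be real numbers satisfying 1/(p+1) + 1/(q+1) ≥ 1 − 2/n + 4/n². Then there is no pair (u, v) of positive C² functions on ℝ^n satisfying the Lane–Emden system −Δu = v^p and −Δv = u^q on all of ℝ^n. -/
open MeasureTheory Real
open scoped InnerProductSpace

/-- The Laplacian of a function `f : ℝⁿ → ℝ`, as the sum of its second partial
derivatives. -/
noncomputable def lap {n : ℕ} (f : EuclideanSpace ℝ (Fin n) → ℝ)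
    (x : EuclideanSpace ℝ (Fin n)) : ℝ :=
  ∑ i : Fin n, fderiv ℝ (fun y => fderiv ℝ f y (EuclideanSpace.single i 1)) x
    (EuclideanSpace.single i 1)

/-!
The proof is the method of moving spheres, run with the Kelvin-type transforms
`(R / ‖x‖) ^ a * u (R ^ 2 • x / ‖x‖ ^ 2)` of `u` and, with weight `b`, of `v`. Writing `N` for the
dimension, the weights `a = (N - 2) * (p + 1) / (min p q + 1)` and
`b = (N - 2) * (q + 1) / (min p q + 1)` are at least the harmonic weight `N - 2`. The extra term
this produces in the Laplacian is a nonnegative multiple of `a * u + 2 * x ⬝ ∇u` at the inverted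
point, and the latter is nonnegative because the spheres of smaller radii have already been passed.
The condition on `p` and `q` gives `p * b < a + 4` and `q * a < b + 4`, so as long as `u` and
`v` dominate their transforms outside the sphere of radius `R`, the differences are strictly
superharmonic there. The Hopf lemma on the sphere and a barrier `c * ‖x‖ ^ (2 - N)` at infinity
then allow `R` to be increased slightly, so every `R` is reached. Hence `a * u + 2 * (x - z) ⬝ ∇u`
is nonnegative for every centre `z`, which forces `∇u = 0` and contradicts `-Δu > 0`.
-/

open EuclideanGeometry Filter Laplacian Metric Module Set
open scoped Topology

section SecondDerivatives

variable {E F G : Type*} [NormedAddCommGroup E] [NormedSpace ℝ E] [NormedAddCommGroup F]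
  [NormedSpace ℝ F] [NormedAddCommGroup G] [NormedSpace ℝ G] {x : E}

lemma hasFDerivAt_fderiv_apply {g : E → F} (hg : ContDiffAt ℝ 2 g x) (v : E) :
    HasFDerivAt (fun y ↦ fderiv ℝ g y v) ((fderiv ℝ (fderiv ℝ g) x).flip v) x := by
  have hg' := ((hg.fderiv_right (m := 1) le_rfl).differentiableAt one_ne_zero).hasFDerivAt
  simpa using hg'.clm_apply (hasFDerivAt_const v x)

lemma fderiv_fderiv_smul {f : E → ℝ} {g : E → F} (hf : ContDiffAt ℝ 2 f x)
    (hg : ContDiffAt ℝ 2 g x) (v : E) :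
    fderiv ℝ (fderiv ℝ (f • g)) x v v =
      f x • fderiv ℝ (fderiv ℝ g) x v v + (2 * fderiv ℝ f x v) • fderiv ℝ g x v +
        fderiv ℝ (fderiv ℝ f) x v v • g x := by
  have heq : (fun y ↦ fderiv ℝ (f • g) y v) =ᶠ[𝓝 x]
      fun y ↦ f y • fderiv ℝ g y v + fderiv ℝ f y v • g y := by
    filter_upwards [hf.eventually (by simp), hg.eventually (by simp)] with y hfy hgy
    simp [fderiv_smul (hfy.differentiableAt two_ne_zero) (hgy.differentiableAt two_ne_zero)]
  have hfD := (hf.differentiableAt two_ne_zero).hasFDerivAt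
  have hgD := (hg.differentiableAt two_ne_zero).hasFDerivAt
  have hD := ((hfD.smul (hasFDerivAt_fderiv_apply hg v)).add
    ((hasFDerivAt_fderiv_apply hf v).smul hgD)).congr_of_eventuallyEq heq
  have := DFunLike.congr_fun ((hasFDerivAt_fderiv_apply (hf.smul hg) v).unique hD) v
  simp only [ContinuousLinearMap.flip_apply, add_apply, smul_apply,
    ContinuousLinearMap.smulRight_apply] at this
  rw [this]
  module

lemma fderiv_fderiv_comp {f : F → G} {g : E → F} (hf : ContDiffAt ℝ 2 f (g x))
    (hg : ContDiffAt ℝ 2 g x) (v : E) :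
    fderiv ℝ (fderiv ℝ (f ∘ g)) x v v =
      fderiv ℝ (fderiv ℝ f) (g x) (fderiv ℝ g x v) (fderiv ℝ g x v) +
        fderiv ℝ f (g x) (fderiv ℝ (fderiv ℝ g) x v v) := by
  have heq : (fun y ↦ fderiv ℝ (f ∘ g) y v) =ᶠ[𝓝 x]
      fun y ↦ fderiv ℝ f (g y) (fderiv ℝ g y v) := by
    filter_upwards [hg.continuousAt.eventually (hf.eventually (by simp)),
      hg.eventually (by simp)] with y hfy hgy
    simp [fderiv_comp y (hfy.differentiableAt two_ne_zero) (hgy.differentiableAt two_ne_zero)]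
  have hf' := ((hf.fderiv_right (m := 1) le_rfl).differentiableAt one_ne_zero).hasFDerivAt
  have hD := ((hf'.comp x (hg.differentiableAt two_ne_zero).hasFDerivAt).clm_apply
    (hasFDerivAt_fderiv_apply hg v)).congr_of_eventuallyEq heq
  have := DFunLike.congr_fun ((hasFDerivAt_fderiv_apply (hf.comp x hg) v).unique hD) v
  simpa [add_comm] using this

end SecondDerivatives

section Laplacian

variable {E : Type*} [NormedAddCommGroup E] [InnerProductSpace ℝ E] {x : E}

lemma hasFDerivAt_norm_rpow_of_ne_zero (s : ℝ) (hx : x ≠ 0) :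
    HasFDerivAt (fun y : E ↦ ‖y‖ ^ s) (innerSL ℝ ((s * ‖x‖ ^ (s - 2)) • x)) x := by
  convert! (hasStrictFDerivAt_norm_sq x).hasFDerivAt.rpow_const (p := s / 2) (by simp [hx]) using 0
  simp_rw [← Real.rpow_natCast_mul (norm_nonneg _), ← Nat.cast_smul_eq_nsmul ℝ, smul_smul, map_smul]
  ring_nf

lemma contDiffAt_norm_rpow (s : ℝ) (hx : x ≠ 0) {m : WithTop ℕ∞} :
    ContDiffAt ℝ m (fun y : E ↦ ‖y‖ ^ s) x :=
  (contDiffAt_norm ℝ hx).rpow_const_of_ne (norm_ne_zero_iff.2 hx)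

lemma fderiv_fderiv_norm_rpow (s : ℝ) (hx : x ≠ 0) (v : E) :
    fderiv ℝ (fderiv ℝ (fun y : E ↦ ‖y‖ ^ s)) x v v =
      s * ‖x‖ ^ (s - 2) * ‖v‖ ^ 2 + s * (s - 2) * ‖x‖ ^ (s - 4) * ⟪x, v⟫_ℝ ^ 2 := by
  have heq : (fun y : E ↦ fderiv ℝ (fun z : E ↦ ‖z‖ ^ s) y v) =ᶠ[𝓝 x]
      fun y ↦ (s * ‖y‖ ^ (s - 2)) * ⟪y, v⟫_ℝ := by
    filter_upwards [eventually_ne_nhds hx] with y hy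
    simp [(hasFDerivAt_norm_rpow_of_ne_zero s hy).fderiv]
  have hD := ((hasFDerivAt_norm_rpow_of_ne_zero (s - 2) hx).const_mul s).mul
    ((hasFDerivAt_id x).inner ℝ (hasFDerivAt_const v x)) |>.congr_of_eventuallyEq heq
  have hfour : ‖x‖ ^ (s - 2 - 2) = ‖x‖ ^ (s - 4) := by ring_nf
  have hDv : fderiv ℝ (fderiv ℝ (fun y : E ↦ ‖y‖ ^ s)) x v v = s * ‖x‖ ^ (s - 2) * ‖v‖ ^ 2 +
      ⟪x, v⟫_ℝ * (s * ((s - 2) * ‖x‖ ^ (s - 4) * ⟪x, v⟫_ℝ)) := by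
    simpa [hfour] using DFunLike.congr_fun
      ((hasFDerivAt_fderiv_apply (contDiffAt_norm_rpow s hx) v).unique hD) v
  linear_combination hDv

variable [FiniteDimensional ℝ E] {F : Type*} [NormedAddCommGroup F] [NormedSpace ℝ F]

lemma laplacian_eq_sum_fderiv_fderiv {ι : Type*} [Fintype ι] (b : OrthonormalBasis ι ℝ E)
    (g : E → F) (x : E) : Δ g x = ∑ i, fderiv ℝ (fderiv ℝ g) x (b i) (b i) := by
  simp [InnerProductSpace.laplacian_eq_iteratedFDeriv_orthonormalBasis g b,
    iteratedFDeriv_two_apply]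

lemma laplacian_comp_add_right (g : E → F) (c x : E) :
    Δ (fun y ↦ g (y + c)) x = Δ g (x + c) := by
  simp [InnerProductSpace.laplacian_eq_iteratedFDeriv_stdOrthonormalBasis,
    iteratedFDeriv_comp_add_right]

lemma laplacian_smul_of_hasFDerivAt {f : E → ℝ} {g : E → F} {w : E} (hf : ContDiffAt ℝ 2 f x)
    (hfw : HasFDerivAt f (innerSL ℝ w) x) (hg : ContDiffAt ℝ 2 g x) :
    Δ (f • g) x = f x • Δ g x + (2 : ℝ) • fderiv ℝ g x w + Δ f x • g x := by
  let b := stdOrthonormalBasis ℝ E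
  have hw : ∑ i, ⟪w, b i⟫_ℝ • fderiv ℝ g x (b i) = fderiv ℝ g x w := by
    conv_rhs => rw [← b.sum_repr' w, map_sum]
    simp [real_inner_comm]
  simp only [laplacian_eq_sum_fderiv_fderiv b, fderiv_fderiv_smul hf hg, hfw.fderiv,
    innerSL_apply_apply, mul_smul, Finset.sum_add_distrib, ← Finset.smul_sum, ← Finset.sum_smul, hw]

-- The images `L (b i)` of an orthonormal basis form an orthonormal basis again.
lemma laplacian_comp_of_hasFDerivAt_smul {f : E → F} {g : E → E} {c : ℝ} {L : E ≃ₗᵢ[ℝ] E}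
    (hf : ContDiffAt ℝ 2 f (g x)) (hg : ContDiffAt ℝ 2 g x)
    (hgL : HasFDerivAt g (c • (L : E →L[ℝ] E)) x) :
    Δ (f ∘ g) x = c ^ 2 • Δ f (g x) + fderiv ℝ f (g x) (Δ g x) := by
  let b := stdOrthonormalBasis ℝ E
  simp [laplacian_eq_sum_fderiv_fderiv b g, laplacian_eq_sum_fderiv_fderiv b (f ∘ g),
    laplacian_eq_sum_fderiv_fderiv (b.map L) f, fderiv_fderiv_comp hf hg, hgL.fderiv,
    Finset.sum_add_distrib, Finset.smul_sum, smul_smul, sq]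

lemma laplacian_norm_rpow (s : ℝ) (hx : x ≠ 0) :
    Δ (fun y : E ↦ ‖y‖ ^ s) x = s * (s + finrank ℝ E - 2) * ‖x‖ ^ (s - 2) := by
  let b := stdOrthonormalBasis ℝ E
  have hsum : ∑ i, ⟪x, b i⟫_ℝ ^ 2 = ‖x‖ ^ 2 := b.sum_sq_inner_left x
  have hpow : ‖x‖ ^ (s - 4) * ‖x‖ ^ 2 = ‖x‖ ^ (s - 2) := by
    rw [← rpow_add_natCast (norm_ne_zero_iff.2 hx)]
    congr 1; push_cast; ring
  simp only [laplacian_eq_sum_fderiv_fderiv b, fderiv_fderiv_norm_rpow s hx, Finset.sum_add_distrib,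
    ← Finset.mul_sum, hsum, b.norm_eq_one, one_pow, Finset.sum_const, Finset.card_univ,
    Fintype.card_fin, nsmul_one]
  linear_combination s * (s - 2) * hpow

lemma laplacian_id : Δ (id : E → E) = 0 := by
  ext x
  have : fderiv ℝ (id : E → E) = fun _ ↦ ContinuousLinearMap.id ℝ E := by
    ext; simp
  simp [laplacian_eq_sum_fderiv_fderiv (stdOrthonormalBasis ℝ E), this]

lemma laplacian_norm_rpow_smul_id (s : ℝ) (hx : x ≠ 0) :
    Δ ((fun y : E ↦ ‖y‖ ^ s) • (id : E → E)) x = (s * (s + finrank ℝ E) * ‖x‖ ^ (s - 2)) • x := by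
  rw [laplacian_smul_of_hasFDerivAt (contDiffAt_norm_rpow s hx)
    (hasFDerivAt_norm_rpow_of_ne_zero s hx) contDiffAt_id, laplacian_norm_rpow s hx, laplacian_id]
  simp only [Pi.zero_apply, smul_zero, fderiv_id, ContinuousLinearMap.id_apply, id]
  module

lemma laplacian_inversion_zero (R : ℝ) (hx : x ≠ 0) :
    Δ (inversion (0 : E) R) x = (-2 * (finrank ℝ E - 2) / ‖x‖ ^ 2) • inversion 0 R x := by
  have heq : inversion (0 : E) R = R ^ 2 • ((fun y : E ↦ ‖y‖ ^ (-2 : ℝ)) • id) := by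
    ext y
    simp [inversion, div_eq_mul_inv, mul_pow, smul_smul]
  have hpow : ‖x‖ ^ (-2 - 2 : ℝ) = (‖x‖ ^ 2)⁻¹ * ‖x‖ ^ (-2 : ℝ) := by
    rw [sub_eq_add_neg, rpow_add (norm_pos_iff.2 hx)]
    simp
  rw [heq, InnerProductSpace.laplacian_smul _ ((contDiffAt_norm_rpow _ hx).smul contDiffAt_id),
    laplacian_norm_rpow_smul_id _ hx, hpow]
  simp only [Pi.smul_apply, Pi.smul_apply', id, smul_smul]
  ring_nf

end Laplacian

section MaximumPrinciple

lemma fderiv_fderiv_nonneg_of_isLocalMin {E : Type*} [NormedAddCommGroup E] [NormedSpace ℝ E]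
    {f : E → ℝ} {x : E} (hf : ContDiffAt ℝ 2 f x) (hmin : IsLocalMin f x) (v : E) :
    0 ≤ fderiv ℝ (fderiv ℝ f) x v v := by
  let γ : ℝ → E := fun t ↦ x + t • v
  have hγ0 : γ 0 = x := by simp [γ]
  have hγ (t : ℝ) : HasDerivAt γ v t := by
    have := ((hasDerivAt_id t).smul_const v).const_add x
    rwa [one_smul] at this
  have hγx : Tendsto γ (𝓝 0) (𝓝 x) := hγ0 ▸ (hγ 0).continuousAt
  have hderiv : deriv (f ∘ γ) =ᶠ[𝓝 0] fun t ↦ fderiv ℝ f (γ t) v := by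
    filter_upwards [hγx.eventually (hf.eventually (by simp))] with t ht
    exact ((ht.differentiableAt two_ne_zero).hasFDerivAt.comp_hasDerivAt t (hγ t)).deriv
  have hderiv2 : deriv (deriv (f ∘ γ)) 0 = fderiv ℝ (fderiv ℝ f) x v v := by
    rw [hderiv.deriv_eq]
    have := hasFDerivAt_fderiv_apply (hγ0.symm ▸ hf) v |>.comp_hasDerivAt 0 (hγ 0)
    simpa [hγ0, Function.comp_def] using this.deriv
  have hγmin : IsLocalMin (f ∘ γ) 0 := by
    filter_upwards [hγx.eventually hmin] with t ht
    simpa [hγ0] using ht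
  by_contra! hneg
  have hγmax : IsLocalMax (f ∘ γ) 0 :=
    isLocalMax_of_deriv_deriv_neg (hderiv2 ▸ hneg) hγmin.deriv_eq_zero
      (hf.continuousAt.comp_of_eq (hγ 0).continuousAt hγ0)
  have hconst : f ∘ γ =ᶠ[𝓝 0] fun _ ↦ f x := by
    filter_upwards [hγmin, hγmax] with t h1 h2
    simpa [hγ0] using le_antisymm h2 h1
  rw [← hderiv2, hconst.deriv.deriv_eq] at hneg
  simp at hneg

variable {E : Type*} [NormedAddCommGroup E] [InnerProductSpace ℝ E] [FiniteDimensional ℝ E]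
  {f : E → ℝ} {x : E} {r R : ℝ}

lemma laplacian_nonneg_of_isLocalMin (hf : ContDiffAt ℝ 2 f x) (hmin : IsLocalMin f x) :
    0 ≤ Δ f x := by
  rw [laplacian_eq_sum_fderiv_fderiv (stdOrthonormalBasis ℝ E)]
  exact Finset.sum_nonneg fun i _ ↦ fderiv_fderiv_nonneg_of_isLocalMin hf hmin _

lemma pos_of_laplacian_neg (hf : ContDiffAt ℝ 2 f x) (hnonneg : ∀ᶠ y in 𝓝 x, 0 ≤ f y)
    (hΔ : Δ f x < 0) : 0 < f x := by
  by_contra! hx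
  exact hΔ.not_ge <| laplacian_nonneg_of_isLocalMin hf <| hnonneg.mono fun y hy ↦ hx.trans hy

lemma nonneg_of_laplacian_neg {K U : Set E} (hK : IsCompact K) (hU : IsOpen U) (hUK : U ⊆ K)
    (hcont : ContinuousOn f K) (hf : ∀ y ∈ U, ContDiffAt ℝ 2 f y) (hΔ : ∀ y ∈ U, Δ f y < 0)
    (hbdry : ∀ y ∈ K \ U, 0 ≤ f y) (hx : x ∈ K) : 0 ≤ f x := by
  obtain ⟨y, hyK, hy⟩ := hK.exists_isMinOn ⟨x, hx⟩ hcont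
  have hyU : y ∉ U := fun hyU ↦ (hΔ y hyU).not_ge <| laplacian_nonneg_of_isLocalMin (hf y hyU) <|
    (hy.on_subset hUK).isLocalMin (hU.mem_nhds hyU)
  exact (hbdry y ⟨hyK, hyU⟩).trans (hy hx)

-- `c * ‖y‖ ^ (2 - N) + d` is harmonic away from the origin.
lemma radial_le_of_laplacian_neg (hr : 0 < r) (hf : ∀ y, ‖y‖ ∈ Icc r R → ContDiffAt ℝ 2 f y)
    (hΔ : ∀ y, ‖y‖ ∈ Ioo r R → Δ f y < 0) {c d : ℝ}
    (hinner : ∀ y, ‖y‖ = r → c * r ^ (2 - finrank ℝ E : ℝ) + d ≤ f y)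
    (houter : ∀ y, ‖y‖ = R → c * R ^ (2 - finrank ℝ E : ℝ) + d ≤ f y) (hx : ‖x‖ ∈ Icc r R) :
    c * ‖x‖ ^ (2 - finrank ℝ E : ℝ) + d ≤ f x := by
  let φ : E → ℝ := c • (fun y ↦ ‖y‖ ^ (2 - finrank ℝ E : ℝ)) + fun _ ↦ d
  have hne {y : E} (hy : ‖y‖ ∈ Icc r R) : y ≠ 0 := norm_pos_iff.1 (hr.trans_le hy.1)
  have hpow {y : E} (hy : ‖y‖ ∈ Icc r R) :
      ContDiffAt ℝ 2 (c • fun y : E ↦ ‖y‖ ^ (2 - finrank ℝ E : ℝ)) y :=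
    (contDiffAt_norm_rpow _ (hne hy)).const_smul c
  have hφ {y : E} (hy : ‖y‖ ∈ Icc r R) : ContDiffAt ℝ 2 φ y := (hpow hy).add contDiffAt_const
  have hΔφ {y : E} (hy : ‖y‖ ∈ Icc r R) : Δ φ y = 0 := by
    rw [(hpow hy).laplacian_add contDiffAt_const,
      InnerProductSpace.laplacian_smul _ (contDiffAt_norm_rpow _ (hne hy)),
      laplacian_norm_rpow _ (hne hy)]
    simp [laplacian_eq_sum_fderiv_fderiv (stdOrthonormalBasis ℝ E)]
  have hIcc : IsCompact (norm ⁻¹' Icc r R : Set E) :=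
    (isCompact_closedBall (0 : E) R).of_isClosed_subset (isClosed_Icc.preimage continuous_norm)
      fun y hy ↦ mem_closedBall_zero_iff.2 hy.2
  refine sub_nonneg.1 <| nonneg_of_laplacian_neg (f := f - φ) hIcc
    (isOpen_Ioo.preimage continuous_norm) (preimage_mono Ioo_subset_Icc_self)
    (fun y hy ↦ ((hf y hy).sub (hφ hy)).continuousAt.continuousWithinAt)
    (fun y hy ↦ (hf y (Ioo_subset_Icc_self hy)).sub (hφ (Ioo_subset_Icc_self hy)))
    (fun y hy ↦ ?_) (fun y hy ↦ ?_) hx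
  · rw [(hf y (Ioo_subset_Icc_self hy)).laplacian_sub (hφ (Ioo_subset_Icc_self hy)),
      hΔφ (Ioo_subset_Icc_self hy), sub_zero]
    exact hΔ y hy
  · rw [← preimage_sdiff, Icc_sdiff_Ioo_same (hx.1.trans hx.2)] at hy
    rcases hy with hy | hy
    · simpa [φ, hy] using hinner y hy
    · simpa [φ, show ‖y‖ = R from hy] using houter y hy

lemma exists_pos_le_on_sphere (hf : ∀ y, ‖y‖ = r → ContinuousAt f y)
    (hpos : ∀ y, ‖y‖ = r → 0 < f y) : ∃ m > 0, ∀ y, ‖y‖ = r → m ≤ f y := by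
  obtain ⟨m, hm, hle⟩ := (isCompact_sphere (0 : E) r).exists_forall_le' (a := 0)
    (fun y hy ↦ (hf y (mem_sphere_zero_iff_norm.1 hy)).continuousWithinAt)
    (fun y hy ↦ hpos y (mem_sphere_zero_iff_norm.1 hy))
  exact ⟨m, hm, fun y hy ↦ hle y (mem_sphere_zero_iff_norm.2 hy)⟩

lemma exists_pos_le_near_sphere_of_laplacian_neg (hr : 0 < r) (hrR : r < R)
    (hf : ∀ y, ‖y‖ ∈ Icc r R → ContDiffAt ℝ 2 f y) (hΔ : ∀ y, ‖y‖ ∈ Ioo r R → Δ f y < 0)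
    (hinner : ∀ y, ‖y‖ = r → 0 ≤ f y) (houter : ∀ y, ‖y‖ = R → 0 < f y) :
    ∃ c > 0, ∀ y, ‖y‖ ∈ Icc r R → c * (1 - (‖y‖ / r) ^ (2 - finrank ℝ E : ℝ)) ≤ f y := by
  obtain ⟨m, hm, hle⟩ := exists_pos_le_on_sphere
    (fun y hy ↦ (hf y ⟨hrR.le.trans_eq hy.symm, hy.le⟩).continuousAt) houter
  refine ⟨m, hm, fun y hy ↦ ?_⟩
  have hpow (s : ℝ) (hs : 0 ≤ s) : -m * r ^ (-(2 - finrank ℝ E) : ℝ) * s ^ (2 - finrank ℝ E : ℝ) +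
      m = m * (1 - (s / r) ^ (2 - finrank ℝ E : ℝ)) := by
    rw [div_rpow hs hr.le, rpow_neg hr.le]
    ring
  rw [← hpow _ (norm_nonneg y)]
  refine radial_le_of_laplacian_neg hr hf hΔ (fun z hz ↦ ?_) (fun z hz ↦ ?_) hy
  · rw [hpow r hr.le, div_self hr.ne', one_rpow, sub_self, mul_zero]
    exact hinner z hz
  · rw [hpow R (hr.trans hrR).le]
    have : 0 ≤ (R / r) ^ (2 - finrank ℝ E : ℝ) :=
      rpow_nonneg (div_nonneg (hr.trans hrR).le hr.le) _
    nlinarith [hle z hz]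

lemma exists_pos_mul_rpow_le_of_laplacian_neg (hN : (2 : ℝ) < finrank ℝ E) (hr : 0 < r)
    (hf : ∀ y, r ≤ ‖y‖ → ContDiffAt ℝ 2 f y) (hΔ : ∀ y, r < ‖y‖ → Δ f y < 0)
    (hnonneg : ∀ y, r ≤ ‖y‖ → 0 ≤ f y) (hpos : ∀ y, ‖y‖ = r → 0 < f y) :
    ∃ c > 0, ∀ y, r ≤ ‖y‖ → c * ‖y‖ ^ (2 - finrank ℝ E : ℝ) ≤ f y := by
  obtain ⟨m, hm, hle⟩ := exists_pos_le_on_sphere (fun y hy ↦ (hf y hy.ge).continuousAt) hpos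
  set s : ℝ := 2 - finrank ℝ E with hs
  have hrs : 0 < r ^ s := rpow_pos_of_pos hr s
  refine ⟨m / r ^ s, by positivity, fun y hy ↦ ?_⟩
  have hR (R : ℝ) (hyR : ‖y‖ ≤ R) : m / r ^ s * ‖y‖ ^ s + -(m / r ^ s * R ^ s) ≤ f y := by
    have hRs : 0 ≤ m / r ^ s * R ^ s :=
      mul_nonneg (by positivity) (rpow_nonneg (hr.le.trans (hy.trans hyR)) s)
    refine radial_le_of_laplacian_neg hr (fun z hz ↦ hf z hz.1) (fun z hz ↦ hΔ z hz.1)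
      (fun z hz ↦ ?_) (fun z hz ↦ ?_) ⟨hy, hyR⟩
    · rw [div_mul_cancel₀ _ hrs.ne']
      linarith [hle z hz]
    · rw [← hs, add_neg_cancel]
      exact hnonneg z ((hy.trans hyR).trans_eq hz.symm)
  have hlim : Tendsto (fun R : ℝ ↦ m / r ^ s * ‖y‖ ^ s + -(m / r ^ s * R ^ s)) atTop
      (𝓝 (m / r ^ s * ‖y‖ ^ s + -(m / r ^ s * 0))) := by
    have := tendsto_rpow_neg_atTop (y := -s) (by linarith)
    rw [neg_neg] at this
    exact ((this.const_mul _).neg).const_add _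
  simpa using le_of_tendsto hlim ((eventually_ge_atTop ‖y‖).mono hR)

end MaximumPrinciple

section Scaling

variable {E : Type*} [NormedAddCommGroup E] [NormedSpace ℝ E] {a b τ : ℝ} {u : E → ℝ} {x : E}

/-- The derivative of `τ ↦ τ ^ a * u (τ ^ 2 • x)` at `τ = 1`: the generator of the scalings under
which the Kelvin transforms of weight `a` are permuted. -/
noncomputable def scalingDeriv (a : ℝ) (u : E → ℝ) (x : E) : ℝ :=
  a * u x + 2 * fderiv ℝ u x x

lemma continuous_scalingDeriv (hu : ContDiff ℝ 1 u) : Continuous (scalingDeriv a u) :=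
  (hu.continuous.const_mul a).add <|
    ((hu.continuous_fderiv one_ne_zero).clm_apply continuous_id).const_mul 2

lemma hasDerivAt_rpow_mul_comp_rpow_smul (hτ : 0 < τ)
    (hu : DifferentiableAt ℝ u (τ ^ b • x)) :
    HasDerivAt (fun t ↦ t ^ a * u (t ^ b • x))
      (τ ^ (a - 1) * (a * u (τ ^ b • x) + b * fderiv ℝ u (τ ^ b • x) (τ ^ b • x))) τ := by
  have hγ := (hasDerivAt_rpow_const (p := b) (Or.inl hτ.ne')).smul_const x
  refine ((hasDerivAt_rpow_const (p := a) (Or.inl hτ.ne')).mul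
    (hu.hasFDerivAt.comp_hasDerivAt τ hγ)).congr_deriv ?_
  simp only [map_smul, smul_eq_mul, rpow_sub_one hτ.ne', Function.comp]
  field_simp

lemma monotoneOn_rpow_mul_comp_sq_smul (hu : Differentiable ℝ u)
    (hnonneg : ∀ y, ‖y‖ ≤ ‖x‖ → 0 ≤ scalingDeriv a u y) :
    MonotoneOn (fun t : ℝ ↦ t ^ a * u (t ^ 2 • x)) (Ioc 0 1) := by
  have hD {t : ℝ} (ht : 0 < t) : HasDerivAt (fun t : ℝ ↦ t ^ a * u (t ^ 2 • x))
      (t ^ (a - 1) * scalingDeriv a u (t ^ 2 • x)) t := by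
    simpa [scalingDeriv] using
      hasDerivAt_rpow_mul_comp_rpow_smul (a := a) (b := 2) (x := x) ht (hu _)
  refine monotoneOn_of_deriv_nonneg (convex_Ioc 0 1)
    (fun t ht ↦ (hD ht.1).continuousAt.continuousWithinAt)
    (fun t ht ↦ (hD (interior_subset ht).1).differentiableAt.differentiableWithinAt) fun t ht ↦ ?_
  obtain ⟨ht0, ht1⟩ := interior_subset ht
  rw [(hD ht0).deriv]
  refine mul_nonneg (rpow_nonneg ht0.le _) (hnonneg _ ?_)
  rw [norm_smul, norm_of_nonneg (sq_nonneg t)]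
  exact mul_le_of_le_one_left (norm_nonneg x) (pow_le_one₀ ht0.le ht1)

end Scaling

section Kelvin

variable {E : Type*} [NormedAddCommGroup E] [InnerProductSpace ℝ E] {a R r : ℝ} {u : E → ℝ} {x : E}

/-- The Kelvin-type transform of `u` with weight `a` about the sphere of radius `R` centred at the
origin. The weight `a = N - 2` gives the classical transform, which preserves harmonicity. -/
noncomputable def kelvin (a R : ℝ) (u : E → ℝ) (x : E) : ℝ :=
  (R / ‖x‖) ^ a * u (inversion 0 R x)

lemma norm_inversion_zero (R : ℝ) (x : E) : ‖inversion 0 R x‖ = R ^ 2 / ‖x‖ := by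
  simpa using dist_inversion_center (0 : E) x R

lemma kelvin_zero_radius (ha : a ≠ 0) : kelvin a 0 u = 0 := by
  ext x
  simp [kelvin, zero_rpow ha]

lemma kelvin_of_norm_eq (hR : 0 < R) (hx : ‖x‖ = R) : kelvin a R u x = u x := by
  simp [kelvin, inversion_of_mem_sphere (mem_sphere_zero_iff_norm.2 hx), hx, hR.ne']

lemma kelvin_eq_norm_rpow_mul (hR : 0 ≤ R) (x : E) :
    kelvin a R u x = ‖x‖ ^ (-a) * (R ^ a * u (R ^ 2 • inversion 0 1 x)) := by
  simp only [kelvin, norm_nonneg, div_rpow hR, inversion, dist_zero_right, div_pow, vsub_eq_sub,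
    sub_zero, vadd_eq_add, add_zero, rpow_neg, one_div, inv_pow, smul_smul]
  ring_nf

lemma kelvin_eq_smul (hR : 0 ≤ R) :
    kelvin a R u = R ^ a • ((fun y : E ↦ ‖y‖ ^ (-a)) • (u ∘ inversion 0 R)) := by
  ext x
  simp only [kelvin, div_rpow hR (norm_nonneg x), Pi.smul_apply, smul_eq_mul, Pi.mul_apply,
    rpow_neg (norm_nonneg x), Function.comp]
  ring

lemma contDiffAt_kelvin (hu : ContDiff ℝ 2 u) (hR : 0 ≤ R) (hx : x ≠ 0) :
    ContDiffAt ℝ 2 (kelvin a R u) x := by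
  have hcomp : ContDiffAt ℝ 2 (u ∘ inversion 0 R) x :=
    hu.contDiffAt.comp x <| contDiffAt_const.inversion contDiffAt_const contDiffAt_id hx
  exact kelvin_eq_smul (a := a) (u := u) hR ▸
    ((contDiffAt_norm_rpow (-a) hx).smul hcomp).const_smul (R ^ a)

lemma continuous_kelvin_radius (ha : 0 ≤ a) (hu : Continuous u) (x : E) :
    Continuous fun R ↦ kelvin a R u x := by
  have hinv : Continuous fun R ↦ inversion 0 R x := by
    simp only [inversion]
    fun_prop
  exact ((continuous_id.div_const _).rpow_const fun _ ↦ Or.inr ha).mul (hu.comp hinv)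

lemma laplacian_kelvin [FiniteDimensional ℝ E] (hu : ContDiff ℝ 2 u) (hR : 0 ≤ R) (hx : x ≠ 0) :
    Δ (kelvin a R u) x = (R / ‖x‖) ^ a * ((R / ‖x‖) ^ 4 * Δ u (inversion 0 R x) +
      (a - (finrank ℝ E - 2)) / ‖x‖ ^ 2 * scalingDeriv a u (inversion 0 R x)) := by
  have hι : HasFDerivAt (inversion 0 R)
      ((R / ‖x‖) ^ 2 • ((ℝ ∙ x)ᗮ.reflection : E →L[ℝ] E)) x := by
    simpa using hasFDerivAt_inversion (R := R) hx
  have hιc : ContDiffAt ℝ 2 (inversion (0 : E) R) x :=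
    contDiffAt_const.inversion contDiffAt_const contDiffAt_id hx
  have hpow2 : ‖x‖ ^ (-a - 2) = (‖x‖ ^ a)⁻¹ / ‖x‖ ^ 2 := by
    rw [rpow_sub (norm_pos_iff.2 hx), rpow_neg (norm_nonneg x), rpow_two]
  have hpow := contDiffAt_norm_rpow (-a) hx (m := 2)
  have hcomp : ContDiffAt ℝ 2 (u ∘ inversion 0 R) x := hu.contDiffAt.comp x hιc
  have hy : (R / ‖x‖) ^ 2 • x = inversion 0 R x := by simp [inversion]
  have hD : fderiv ℝ (u ∘ inversion 0 R) x x =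
      -fderiv ℝ u (inversion 0 R x) (inversion 0 R x) := by
    rw [((hu.differentiable two_ne_zero _).hasFDerivAt.comp x hι).fderiv]
    simp [Submodule.reflection_orthogonalComplement_singleton_eq_neg, ← hy]
  have hΔ : Δ (u ∘ inversion 0 R) x = (R / ‖x‖) ^ 4 * Δ u (inversion 0 R x) -
      2 * (finrank ℝ E - 2) / ‖x‖ ^ 2 * fderiv ℝ u (inversion 0 R x) (inversion 0 R x) := by
    rw [laplacian_comp_of_hasFDerivAt_smul hu.contDiffAt hιc hι, laplacian_inversion_zero R hx,
      map_smul, smul_eq_mul, smul_eq_mul]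
    ring
  rw [kelvin_eq_smul hR, InnerProductSpace.laplacian_smul _ (hpow.smul hcomp),
    laplacian_smul_of_hasFDerivAt hpow (hasFDerivAt_norm_rpow_of_ne_zero _ hx) hcomp, hΔ, map_smul,
    hD, laplacian_norm_rpow _ hx]
  simp only [smul_eq_mul, Function.comp, scalingDeriv, div_rpow hR (norm_nonneg x),
    rpow_neg (norm_nonneg x), hpow2]
  ring

lemma kelvin_le_self_of_scalingDeriv_nonneg (hu : Differentiable ℝ u) (hR : 0 < R) (hRx : R ≤ ‖x‖)
    (hnonneg : ∀ y, ‖y‖ ≤ ‖x‖ → 0 ≤ scalingDeriv a u y) : kelvin a R u x ≤ u x := by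
  have hx : 0 < ‖x‖ := hR.trans_le hRx
  have := monotoneOn_rpow_mul_comp_sq_smul hu hnonneg ⟨div_pos hR hx, div_le_one_of_le₀ hRx hx.le⟩
    (right_mem_Ioc.2 zero_lt_one) (div_le_one_of_le₀ hRx hx.le)
  simpa [kelvin, inversion] using this

lemma hasDerivAt_sub_kelvin_ray (hu : DifferentiableAt ℝ u x) (hx : x ≠ 0) :
    HasDerivAt (fun t : ℝ ↦ u (t • x) - kelvin a ‖x‖ u (t • x)) (scalingDeriv a u x) 1 := by
  have hself := hasDerivAt_rpow_mul_comp_rpow_smul (a := 0) (b := 1) (x := x) zero_lt_one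
    (by simpa using hu)
  have hkelvin := hasDerivAt_rpow_mul_comp_rpow_smul (a := -a) (b := -1) (x := x) zero_lt_one
    (by simpa using hu)
  refine ((hself.sub hkelvin).congr_of_eventuallyEq ?_).congr_deriv ?_
  · filter_upwards [lt_mem_nhds zero_lt_one] with t ht
    have hdiv : ‖x‖ / ‖t • x‖ = t⁻¹ := by
      rw [norm_smul, norm_of_nonneg ht.le]
      field_simp [norm_ne_zero_iff.2 hx]
    simp [kelvin, inversion, hdiv, smul_smul, rpow_neg ht.le, inv_rpow ht.le, rpow_neg_one, sq,
      ht.ne']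
  · simp only [zero_sub, one_rpow, rpow_one, one_smul, zero_mul, one_mul, zero_add, neg_mul,
      scalingDeriv]
    ring

lemma eventually_kelvin_lt [ProperSpace E] (ha : 0 < a) (hu : Continuous u) (hR : 0 ≤ R)
    (hr : 0 < r) {ε : ℝ} (hε : 0 < ε) : ∀ᶠ j in 𝓝[≥] R, ∀ x, r ≤ ‖x‖ →
      kelvin a j u x < kelvin a R u x + ε * ‖x‖ ^ (-a) := by
  have hclose : ∀ᶠ j in 𝓝 R, ∀ z ∈ closedBall (0 : E) (1 / r),
      j ^ a * u (j ^ 2 • z) < R ^ a * u (R ^ 2 • z) + ε := by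
    refine (isCompact_closedBall _ _).eventually_forall_of_forall_eventually fun z _ ↦ ?_
    have hcont : Continuous fun p : ℝ × E ↦ p.1 ^ a * u (p.1 ^ 2 • p.2) :=
      (continuous_fst.rpow_const fun _ ↦ Or.inr ha.le).mul (hu.comp (by fun_prop))
    exact hcont.continuousAt.eventually_lt (by fun_prop) (lt_add_of_pos_right _ hε)
  filter_upwards [self_mem_nhdsWithin, hclose.filter_mono nhdsWithin_le_nhds] with j hj hlt x hx
  have hz : inversion 0 1 x ∈ closedBall (0 : E) (1 / r) := by
    rw [mem_closedBall_zero_iff, norm_inversion_zero, one_pow]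
    exact one_div_le_one_div_of_le hr hx
  rw [kelvin_eq_norm_rpow_mul (hR.trans hj), kelvin_eq_norm_rpow_mul hR, mul_comm ε, ← mul_add]
  exact mul_lt_mul_of_pos_left (hlt _ hz) (rpow_pos_of_pos (hr.trans_le hx) _)

end Kelvin

section MovingSpheres

lemma nonneg_of_hasDerivAt_of_eventually_nonneg {f : ℝ → ℝ} {f' t : ℝ} (hf : HasDerivAt f f' t)
    (ht : f t = 0) (hnonneg : ∀ᶠ s in 𝓝[>] t, 0 ≤ f s) : 0 ≤ f' := by
  refine ge_of_tendsto ((hasDerivWithinAt_iff_tendsto_slope' self_notMem_Ioi).1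
    (hf.hasDerivWithinAt (s := Ioi t))) ?_
  filter_upwards [hnonneg, self_mem_nhdsWithin] with s hs hts
  rw [slope_def_field, ht, sub_zero]
  exact div_nonneg hs (sub_nonneg.2 (mem_Ioi.1 hts).le)

lemma exists_gt_forall_norm_le_nonneg {E : Type*} [NormedAddCommGroup E] [ProperSpace E]
    {f : E → ℝ} {R : ℝ} (hf : Continuous f) (hball : ∀ x, ‖x‖ < R → 0 ≤ f x)
    (hsphere : ∀ x, ‖x‖ = R → 0 < f x) : ∃ r > R, ∀ x, ‖x‖ ≤ r → 0 ≤ f x := by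
  have hC : IsCompact (closedBall (0 : E) (R + 1) ∩ {x | R ≤ ‖x‖ ∧ f x ≤ 0}) :=
    (isCompact_closedBall _ _).inter_right <|
      (isClosed_le continuous_const continuous_norm).inter (isClosed_le hf continuous_const)
  obtain ⟨s, hRs, hs⟩ := hC.exists_forall_le' (f := norm) (a := R) (by fun_prop)
    fun x hx ↦ lt_of_le_of_ne hx.2.1 fun h ↦ (hsphere x h.symm).not_ge hx.2.2
  obtain ⟨r, hRr, hr⟩ := exists_between (lt_min hRs (lt_add_one R))
  refine ⟨r, hRr, fun x hxr ↦ ?_⟩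
  by_contra! hneg
  have hRx : R ≤ ‖x‖ := not_lt.1 fun h ↦ hneg.not_ge (hball x h)
  have hxC : x ∈ closedBall (0 : E) (R + 1) :=
    mem_closedBall_zero_iff.2 (hxr.trans (hr.le.trans (min_le_right _ _)))
  exact (hxr.trans_lt (hr.trans_le (min_le_left _ _))).not_ge (hs x ⟨hxC, hRx, hneg.le⟩)

variable {E : Type*} [NormedAddCommGroup E] [InnerProductSpace ℝ E] {a R : ℝ} {u : E → ℝ} {x : E}

/-- `u` dominates its Kelvin transform outside the sphere of radius `R`: the inequality propagated
in `R` by the method of moving spheres. It is required only where `R < ‖x‖`; on the sphere itself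
the two sides agree when `0 < R`. -/
def KelvinLE (a R : ℝ) (u : E → ℝ) : Prop :=
  ∀ x, R < ‖x‖ → kelvin a R u x ≤ u x

lemma isClosed_setOf_kelvinLE (ha : 0 ≤ a) (hu : Continuous u) :
    IsClosed {R | KelvinLE a R u} := by
  have : {R | KelvinLE a R u} = ⋂ x, Ici ‖x‖ ∪ {R | kelvin a R u x ≤ u x} := by
    ext R
    simp [KelvinLE, or_iff_not_imp_left]
  rw [this]
  exact isClosed_iInter fun x ↦
    isClosed_Ici.union (isClosed_le (continuous_kelvin_radius ha hu x) continuous_const)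

lemma KelvinLE.scalingDeriv_nonneg (h : KelvinLE a ‖x‖ u) (ha : 0 ≤ a)
    (hu : DifferentiableAt ℝ u x) (hu0 : 0 ≤ u 0) : 0 ≤ scalingDeriv a u x := by
  rcases eq_or_ne x 0 with rfl | hx
  · simpa [scalingDeriv] using mul_nonneg ha hu0
  refine nonneg_of_hasDerivAt_of_eventually_nonneg (hasDerivAt_sub_kelvin_ray hu hx) ?_ ?_
  · simp [kelvin_of_norm_eq (norm_pos_iff.2 hx)]
  · filter_upwards [self_mem_nhdsWithin] with t ht
    refine sub_nonneg.2 (h _ ?_)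
    rw [norm_smul, norm_of_nonneg (zero_lt_one.trans ht).le]
    exact lt_mul_of_one_lt_left (norm_pos_iff.2 hx) ht

variable [FiniteDimensional ℝ E]

lemma KelvinLE.sub_kelvin_pos (h : KelvinLE a R u) (hu : ContDiff ℝ 2 u) (hR : 0 ≤ R)
    (hx : R < ‖x‖) (hΔ : Δ (u - kelvin a R u) x < 0) : 0 < (u - kelvin a R u) x := by
  refine pos_of_laplacian_neg
    (hu.contDiffAt.sub (contDiffAt_kelvin hu hR (norm_pos_iff.1 (hR.trans_lt hx)))) ?_ hΔ
  filter_upwards [continuous_norm.continuousAt.eventually (lt_mem_nhds hx)] with y hy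
  exact sub_nonneg.2 (h y hy)

lemma KelvinLE.scalingDeriv_pos_of_norm_eq (h : KelvinLE a R u) (hN : (2 : ℝ) < finrank ℝ E)
    (hu : ContDiff ℝ 2 u) (hΔ : ∀ y, R < ‖y‖ → Δ (u - kelvin a R u) y < 0) (hR : 0 < R)
    (hx : ‖x‖ = R) : 0 < scalingDeriv a u x := by
  obtain ⟨c, hc, hle⟩ := exists_pos_le_near_sphere_of_laplacian_neg (f := u - kelvin a R u)
    (R := 2 * R) hR (by linarith)
    (fun y hy ↦ hu.contDiffAt.sub
      (contDiffAt_kelvin hu hR.le (norm_pos_iff.1 (hR.trans_le hy.1))))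
    (fun y hy ↦ hΔ y hy.1) (fun y hy ↦ by simp [kelvin_of_norm_eq hR hy])
    (fun y hy ↦ h.sub_kelvin_pos hu hR.le (by linarith) (hΔ y (by linarith)))
  have hx0 : x ≠ 0 := norm_pos_iff.1 (hR.trans_eq hx.symm)
  have hray := hasDerivAt_sub_kelvin_ray (a := a) (hu.differentiable two_ne_zero x) hx0
  rw [hx] at hray
  have hbarrier := ((hasDerivAt_rpow_const (x := 1) (p := 2 - finrank ℝ E)
    (Or.inl one_ne_zero)).const_sub 1).const_mul c
  have hslope := nonneg_of_hasDerivAt_of_eventually_nonneg (hray.sub hbarrier)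
    (by simp [kelvin_of_norm_eq hR hx]) ?_
  · simp only [one_rpow, mul_one] at hslope
    nlinarith
  · filter_upwards [Ioo_mem_nhdsGT one_lt_two] with t ht
    have ht0 : 0 < t := zero_lt_one.trans ht.1
    have hnorm : ‖t • x‖ = t * R := by rw [norm_smul, norm_of_nonneg ht0.le, hx]
    have := hle (t • x) (by rw [hnorm]; constructor <;> nlinarith [ht.1, ht.2])
    rw [hnorm, mul_div_cancel_right₀ _ hR.ne'] at this
    exact sub_nonneg.2 this

lemma KelvinLE.eventually_of_exists_gt (h : KelvinLE a R u) (hN : (2 : ℝ) < finrank ℝ E)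
    (ha : finrank ℝ E - 2 ≤ a) (hu : ContDiff ℝ 2 u) (hR : 0 ≤ R)
    (hΔ : ∀ y, R < ‖y‖ → Δ (u - kelvin a R u) y < 0) {r : ℝ} (hRr : R < r)
    (hscal : ∀ y, ‖y‖ ≤ r → 0 ≤ scalingDeriv a u y) : ∀ᶠ j in 𝓝[>] R, KelvinLE a j u := by
  have hr : 0 < r := hR.trans_lt hRr
  have ha0 : 0 < a := by linarith
  have hpos (y : E) (hy : r ≤ ‖y‖) : 0 < (u - kelvin a R u) y :=
    h.sub_kelvin_pos hu hR (hRr.trans_le hy) (hΔ y (hRr.trans_le hy))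
  obtain ⟨c, hc, hfar⟩ := exists_pos_mul_rpow_le_of_laplacian_neg (f := u - kelvin a R u) hN hr
    (fun y hy ↦ hu.contDiffAt.sub (contDiffAt_kelvin hu hR (norm_pos_iff.1 (hr.trans_le hy))))
    (fun y hy ↦ hΔ y (hRr.trans hy)) (fun y hy ↦ (hpos y hy).le) (fun y hy ↦ hpos y hy.ge)
  have hε : 0 < c * r ^ (a - (finrank ℝ E - 2)) := by positivity
  filter_upwards [self_mem_nhdsWithin, (eventually_kelvin_lt ha0 hu.continuous hR hr
    hε).filter_mono (nhdsWithin_mono R Ioi_subset_Ici_self)] with j hj hclose x hx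
  rcases le_total ‖x‖ r with hxr | hrx
  · exact kelvin_le_self_of_scalingDeriv_nonneg (hu.differentiable two_ne_zero)
      (hR.trans_lt hj) hx.le fun y hy ↦ hscal y (hy.trans hxr)
  · have hdecay : r ^ (a - (finrank ℝ E - 2)) * ‖x‖ ^ (-a) ≤ ‖x‖ ^ (2 - finrank ℝ E : ℝ) := by
      calc r ^ (a - (finrank ℝ E - 2)) * ‖x‖ ^ (-a)
          ≤ ‖x‖ ^ (a - (finrank ℝ E - 2)) * ‖x‖ ^ (-a) := by gcongr
        _ = ‖x‖ ^ (2 - finrank ℝ E : ℝ) := by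
          rw [← rpow_add (hr.trans_le hrx)]
          ring_nf
    have := hfar x hrx
    rw [Pi.sub_apply] at this
    nlinarith [hclose x hrx]

lemma KelvinLE.eventually (h : KelvinLE a R u) (hN : (2 : ℝ) < finrank ℝ E)
    (ha : finrank ℝ E - 2 ≤ a) (hu : ContDiff ℝ 2 u) (hu0 : 0 < u 0) (hR : 0 ≤ R)
    (hΔ : ∀ y, R < ‖y‖ → Δ (u - kelvin a R u) y < 0)
    (hscal : ∀ y, ‖y‖ < R → 0 ≤ scalingDeriv a u y) : ∀ᶠ j in 𝓝[>] R, KelvinLE a j u := by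
  have hsphere (y : E) (hy : ‖y‖ = R) : 0 < scalingDeriv a u y := by
    rcases hR.eq_or_lt with rfl | hR
    · obtain rfl := norm_eq_zero.1 hy
      simpa [scalingDeriv] using mul_pos (by linarith) hu0
    · exact h.scalingDeriv_pos_of_norm_eq hN hu hΔ hR hy
  obtain ⟨r, hRr, hr⟩ := exists_gt_forall_norm_le_nonneg
    (continuous_scalingDeriv (hu.of_le one_le_two)) hscal hsphere
  exact h.eventually_of_exists_gt hN ha hu hR hΔ hRr hr

end MovingSpheres

section LaneEmden

variable {E : Type*} [NormedAddCommGroup E] [InnerProductSpace ℝ E] [FiniteDimensional ℝ E]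
  {a b p q R : ℝ} {u v : E → ℝ} {x : E}

/-- `(u, v)` is a positive classical solution of the Lane–Emden system `-Δu = v ^ p`,
`-Δv = u ^ q` on the whole space. -/
structure IsLaneEmdenSolution (p q : ℝ) (u v : E → ℝ) : Prop where
  contDiff_fst : ContDiff ℝ 2 u
  contDiff_snd : ContDiff ℝ 2 v
  pos_fst : ∀ x, 0 < u x
  pos_snd : ∀ x, 0 < v x
  neg_laplacian_fst : ∀ x, -Δ u x = v x ^ p
  neg_laplacian_snd : ∀ x, -Δ v x = u x ^ q

lemma rpow_mul_rpow_lt_of_rpow_mul_le {ρ s t : ℝ} (hρ : 0 < ρ) (hρ1 : ρ < 1) (hs : 0 < s)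
    (hp : 0 ≤ p) (hpb : p * b < a) (hst : ρ ^ b * s ≤ t) : ρ ^ a * s ^ p < t ^ p := by
  calc ρ ^ a * s ^ p
      < ρ ^ (p * b) * s ^ p :=
        mul_lt_mul_of_pos_right (rpow_lt_rpow_of_exponent_gt hρ hρ1 hpb) (rpow_pos_of_pos hs p)
    _ = (ρ ^ b * s) ^ p := by rw [mul_comm p, rpow_mul hρ.le, mul_rpow (by positivity) hs.le]
    _ ≤ t ^ p := rpow_le_rpow (by positivity) hst hp

namespace IsLaneEmdenSolution

lemma symm (h : IsLaneEmdenSolution p q u v) : IsLaneEmdenSolution q p v u :=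
  ⟨h.contDiff_snd, h.contDiff_fst, h.pos_snd, h.pos_fst, h.neg_laplacian_snd, h.neg_laplacian_fst⟩

lemma comp_add_right (h : IsLaneEmdenSolution p q u v) (z : E) :
    IsLaneEmdenSolution p q (fun y ↦ u (y + z)) (fun y ↦ v (y + z)) where
  contDiff_fst := h.contDiff_fst.comp (contDiff_id.add contDiff_const)
  contDiff_snd := h.contDiff_snd.comp (contDiff_id.add contDiff_const)
  pos_fst y := h.pos_fst (y + z)
  pos_snd y := h.pos_snd (y + z)
  neg_laplacian_fst y := by rw [laplacian_comp_add_right, h.neg_laplacian_fst]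
  neg_laplacian_snd y := by rw [laplacian_comp_add_right, h.neg_laplacian_snd]

lemma laplacian_fst_neg (h : IsLaneEmdenSolution p q u v) (x : E) : Δ u x < 0 :=
  neg_pos.1 <| h.neg_laplacian_fst x ▸ rpow_pos_of_pos (h.pos_snd x) p

lemma laplacian_sub_kelvin_neg (h : IsLaneEmdenSolution p q u v) (hN : (2 : ℝ) < finrank ℝ E)
    (hp : 0 ≤ p) (ha : finrank ℝ E - 2 ≤ a) (hpb : p * b < a + 4) (hR : 0 ≤ R)
    (hv : KelvinLE b R v) (hscal : ∀ y, ‖y‖ < R → 0 ≤ scalingDeriv a u y) (hx : R < ‖x‖) :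
    Δ (u - kelvin a R u) x < 0 := by
  rcases hR.eq_or_lt with rfl | hR
  · rw [kelvin_zero_radius (by linarith), sub_zero]
    exact h.laplacian_fst_neg x
  have hx0 : 0 < ‖x‖ := hR.trans hx
  set y := inversion 0 R x
  set ρ := R / ‖x‖
  have hρ : 0 < ρ := div_pos hR hx0
  have hρ1 : ρ < 1 := (div_lt_one hx0).2 hx
  have hyR : ‖y‖ < R := by
    rw [norm_inversion_zero, div_lt_iff₀ hx0]
    nlinarith
  have hgain : ρ ^ (a + 4) * v y ^ p < v x ^ p :=
    rpow_mul_rpow_lt_of_rpow_mul_le hρ hρ1 (h.pos_snd y) hp hpb (hv x hx)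
  have hweight : 0 ≤ ρ ^ a * ((a - (finrank ℝ E - 2)) / ‖x‖ ^ 2 * scalingDeriv a u y) :=
    mul_nonneg (rpow_nonneg hρ.le a) <|
      mul_nonneg (div_nonneg (sub_nonneg.2 ha) (sq_nonneg _)) (hscal y hyR)
  have hρ4 : ρ ^ (a + 4) = ρ ^ a * ρ ^ 4 := by exact_mod_cast rpow_add_natCast hρ.ne' a 4
  have hΔx := h.neg_laplacian_fst x
  have hΔy := h.neg_laplacian_fst y
  rw [h.contDiff_fst.contDiffAt.laplacian_sub
    (contDiffAt_kelvin h.contDiff_fst hR.le (norm_pos_iff.1 hx0)),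
    laplacian_kelvin h.contDiff_fst hR.le (norm_pos_iff.1 hx0)]
  rw [hρ4, ← hΔx, ← hΔy] at hgain
  linarith

lemma eventually_kelvinLE (h : IsLaneEmdenSolution p q u v) (hN : (2 : ℝ) < finrank ℝ E)
    (hp : 0 ≤ p) (ha : finrank ℝ E - 2 ≤ a) (hpb : p * b < a + 4) (hR : 0 ≤ R)
    (hv : KelvinLE b R v) (hu : ∀ r ∈ Icc 0 R, KelvinLE a r u) :
    ∀ᶠ j in 𝓝[>] R, KelvinLE a j u := by
  have hscal (y : E) (hy : ‖y‖ < R) : 0 ≤ scalingDeriv a u y :=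
    (hu ‖y‖ ⟨norm_nonneg y, hy.le⟩).scalingDeriv_nonneg (by linarith)
      (h.contDiff_fst.differentiable two_ne_zero y) (h.pos_fst 0).le
  exact (hu R (right_mem_Icc.2 hR)).eventually hN ha h.contDiff_fst (h.pos_fst 0) hR
    (fun y ↦ h.laplacian_sub_kelvin_neg hN hp ha hpb hR hv hscal) hscal

lemma kelvinLE (h : IsLaneEmdenSolution p q u v) (hN : (2 : ℝ) < finrank ℝ E) (hp : 0 ≤ p)
    (hq : 0 ≤ q) (ha : finrank ℝ E - 2 ≤ a) (hb : finrank ℝ E - 2 ≤ b) (hpb : p * b < a + 4)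
    (hqa : q * a < b + 4) (hR : 0 ≤ R) : KelvinLE a R u := by
  have ha0 : 0 < a := by linarith
  have hb0 : 0 < b := by linarith
  have hsubset : Icc 0 R ⊆ {r | KelvinLE a r u} ∩ {r | KelvinLE b r v} := by
    refine IsClosed.Icc_subset_of_forall_mem_nhdsGT_of_Icc_subset ?_ ⟨?_, ?_⟩ fun r hr hle ↦ ?_
    · exact ((isClosed_setOf_kelvinLE ha0.le h.contDiff_fst.continuous).inter
        (isClosed_setOf_kelvinLE hb0.le h.contDiff_snd.continuous)).inter isClosed_Icc
    · exact fun x _ ↦ (congrFun (kelvin_zero_radius ha0.ne') x).trans_le (h.pos_fst x).le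
    · exact fun x _ ↦ (congrFun (kelvin_zero_radius hb0.ne') x).trans_le (h.pos_snd x).le
    · have hr' := hle (right_mem_Icc.2 hr.1)
      exact (h.eventually_kelvinLE hN hp ha hpb hr.1 hr'.2 fun s hs ↦ (hle hs).1).and
        (h.symm.eventually_kelvinLE hN hq hb hqa hr.1 hr'.1 fun s hs ↦ (hle hs).2)
  exact (hsubset (right_mem_Icc.2 hR)).1

lemma fderiv_fst_eq_zero (h : IsLaneEmdenSolution p q u v) (hN : (2 : ℝ) < finrank ℝ E)
    (hp : 0 ≤ p) (hq : 0 ≤ q) (ha : finrank ℝ E - 2 ≤ a) (hb : finrank ℝ E - 2 ≤ b)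
    (hpb : p * b < a + 4) (hqa : q * a < b + 4) : fderiv ℝ u = 0 := by
  have hscal (x w : E) : 0 ≤ a * u x + 2 * fderiv ℝ u x w := by
    have hz := h.comp_add_right (x - w)
    have := (hz.kelvinLE hN hp hq ha hb hpb hqa (norm_nonneg w)).scalingDeriv_nonneg
      (by linarith) (hz.contDiff_fst.differentiable two_ne_zero w) (hz.pos_fst 0).le
    simpa only [scalingDeriv, fderiv_comp_add_right, add_sub_cancel] using this
  ext x w
  by_contra hne
  have := hscal x (-((a * u x + 1) / fderiv ℝ u x w) • w)
  rw [map_smul, smul_eq_mul, neg_mul, div_mul_cancel₀ _ hne] at this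
  have := mul_pos (show 0 < a by linarith) (h.pos_fst x)
  linarith

end IsLaneEmdenSolution

end LaneEmden

section Exponents

variable {N p q : ℝ}

lemma exists_kelvin_weights {d : ℝ} (hd : 0 ≤ d) (hp : 0 ≤ p) (hq : 0 ≤ q)
    (h : d * (p * q - 1) < 4 * (min p q + 1)) :
    ∃ a b, d ≤ a ∧ d ≤ b ∧ p * b < a + 4 ∧ q * a < b + 4 := by
  have hm : 0 < min p q + 1 := add_pos_of_nonneg_of_pos (le_min hp hq) one_pos
  have hle {s : ℝ} (hs : min p q ≤ s) : d ≤ d * (s + 1) / (min p q + 1) := by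
    rw [le_div_iff₀ hm]
    gcongr
  have hlt : d * (p * q - 1) / (min p q + 1) < 4 := (div_lt_iff₀ hm).2 h
  refine ⟨d * (p + 1) / (min p q + 1), d * (q + 1) / (min p q + 1), hle (min_le_left p q),
    hle (min_le_right p q), ?_, ?_⟩
  · rw [← sub_lt_iff_lt_add']
    exact lt_of_eq_of_lt (by ring) hlt
  · rw [← sub_lt_iff_lt_add']
    exact lt_of_eq_of_lt (by ring) hlt

lemma sub_two_mul_lt_of_le_one_div_add_one_div (hN : 2 < N) (hp : 0 ≤ p) (hq : 1 ≤ q)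
    (h : 1 - 2 / N + 4 / N ^ 2 ≤ 1 / (p + 1) + 1 / (q + 1)) :
    (N - 2) * (p * q - 1) < 4 * (q + 1) := by
  have hN0 : 0 < N := by linarith
  have hpq : N ^ 2 * (p * q - 1) ≤ (2 * N - 4) * ((p + 1) * (q + 1)) := by
    field_simp at h
    linarith
  have hq2 : 1 / (q + 1) ≤ 1 / 2 := one_div_le_one_div_of_le two_pos (by linarith)
  have hp1 : (N ^ 2 - 4 * N + 8) * (p + 1) ≤ 2 * N ^ 2 := by
    have : 1 - 2 / N + 4 / N ^ 2 ≤ 1 / (p + 1) + 1 / 2 := h.trans (by gcongr)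
    field_simp at this
    linarith
  have hp2 : (N - 2) ^ 2 * (p + 1) < 2 * N ^ 2 := by linarith
  have : N ^ 2 * ((N - 2) * (p * q - 1)) < N ^ 2 * (4 * (q + 1)) := by
    calc N ^ 2 * ((N - 2) * (p * q - 1))
        ≤ (N - 2) * ((2 * N - 4) * ((p + 1) * (q + 1))) := by
          rw [mul_left_comm]
          exact mul_le_mul_of_nonneg_left hpq (by linarith)
      _ = 2 * (q + 1) * ((N - 2) ^ 2 * (p + 1)) := by ring
      _ < 2 * (q + 1) * (2 * N ^ 2) := by gcongr
      _ = N ^ 2 * (4 * (q + 1)) := by ring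
  exact lt_of_mul_lt_mul_left this (sq_nonneg N)

lemma sub_two_mul_lt_min_of_le_one_div_add_one_div (hN : 2 < N) (hp : 1 ≤ p) (hq : 1 ≤ q)
    (h : 1 - 2 / N + 4 / N ^ 2 ≤ 1 / (p + 1) + 1 / (q + 1)) :
    (N - 2) * (p * q - 1) < 4 * (min p q + 1) := by
  rcases min_choice p q with hm | hm <;> rw [hm]
  · rw [mul_comm p]
    exact sub_two_mul_lt_of_le_one_div_add_one_div hN (by linarith) hp
      (by rwa [add_comm (1 / (q + 1))])
  · exact sub_two_mul_lt_of_le_one_div_add_one_div hN (by linarith) hq h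

end Exponents

theorem laneEmden_conjecture_new_region_general {E : Type*} [NormedAddCommGroup E]
    [InnerProductSpace ℝ E] [FiniteDimensional ℝ E] {p q : ℝ} (hN : 2 < finrank ℝ E)
    (hp : 0 ≤ p) (hq : 0 ≤ q) (h : (finrank ℝ E - 2) * (p * q - 1) < 4 * (min p q + 1)) :
    ¬ ∃ u v : E → ℝ, IsLaneEmdenSolution p q u v := by
  rintro ⟨u, v, huv⟩
  have hN' : (2 : ℝ) < finrank ℝ E := by exact_mod_cast hN
  obtain ⟨a, b, ha, hb, hpb, hqa⟩ := exists_kelvin_weights (by linarith) hp hq h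
  have hfderiv : fderiv ℝ u = 0 := huv.fderiv_fst_eq_zero hN' hp hq ha hb hpb hqa
  have hΔ : Δ u 0 = 0 := by
    simp [laplacian_eq_sum_fderiv_fderiv (stdOrthonormalBasis ℝ E), hfderiv]
  exact (huv.laplacian_fst_neg 0).ne hΔ

lemma lap_eq_laplacian {n : ℕ} {f : EuclideanSpace ℝ (Fin n) → ℝ} (hf : ContDiff ℝ 2 f) :
    lap f = Δ f := by
  ext x
  simp only [lap, laplacian_eq_sum_fderiv_fderiv (EuclideanSpace.basisFun (Fin n) ℝ),
    EuclideanSpace.basisFun_apply, (hasFDerivAt_fderiv_apply hf.contDiffAt _).fderiv,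
    ContinuousLinearMap.flip_apply]

theorem laneEmden_conjecture_new_region (n : ℕ) (hn : 5 ≤ n) (p q : ℝ)
    (hp : 1 ≤ p) (hq : 1 ≤ q)
    (hsub : 1 - 2 / (n : ℝ) + 4 / (n : ℝ) ^ 2 ≤ 1 / (p + 1) + 1 / (q + 1)) :
    ¬ ∃ u v : EuclideanSpace ℝ (Fin n) → ℝ,
        ContDiff ℝ 2 u ∧ ContDiff ℝ 2 v ∧
        (∀ x, 0 < u x) ∧ (∀ x, 0 < v x) ∧
        (∀ x, -lap u x = v x ^ p) ∧ (∀ x, -lap v x = u x ^ q) := by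
  rintro ⟨u, v, hu, hv, hu0, hv0, hΔu, hΔv⟩
  have huv : IsLaneEmdenSolution p q u v :=
    ⟨hu, hv, hu0, hv0, lap_eq_laplacian hu ▸ hΔu, lap_eq_laplacian hv ▸ hΔv⟩
  have hn2 : (2 : ℝ) < n := by exact_mod_cast (by lia : 2 < n)
  have hlt := sub_two_mul_lt_min_of_le_one_div_add_one_div hn2 hp hq hsub
  rw [← finrank_euclideanSpace_fin (𝕜 := ℝ) (n := n)] at hn2 hlt
  exact laneEmden_conjecture_new_region_general (by exact_mod_cast hn2) (zero_le_one.trans hp)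
    (zero_le_one.trans hq) hlt ⟨u, v, huv⟩
end

section
/- Let p ≥ 1 and q ≥ 1. For each real constant c₀ > 2 there exists an integer N(c₀) such that for every integer n ≥ N(c₀), if 1/(p+1) + 1/(q+1) ≥ 1 − 2/n + c₀/n², then the Lane–Emden system −Δu = v^p, −Δv = u^q admits no positive classical solution on ℝ^n. -/
open MeasureTheory Real
open scoped InnerProductSpace

/-!
The logarithms `w = log u` and `z = log v` satisfy `-Δw = |∇w|² + exp (p * z - w)` and
`-Δz = |∇z|² + exp (q * w - z)`. The proof is a Bernstein-type gradient estimate in the spirit of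
Li and Yau: at a maximum of `ρ² max (q|∇w|²) (p|∇z|²)`, with `ρ = R² - |x - c|²`, Bochner's formula
applies to the larger of the two terms, say the first. There the Cauchy–Schwarz inequality gives
`p ∇w · ∇z ≤ √(pq) |∇w|²`, so the exponential source costs a term proportional to `√(pq) - 1`. This
is absorbed by `|D²w|²`, bounded below through the trace of `D²w` on the hyperplane orthogonal to
`∇w`, as soon as `(√(pq) - 1) * (n - 1) < 4`. Then `|∇w|² + |∇z|² = O(R⁻²)` at the center of every
ball, so `w` and `z` are constant, which the positive source forbids.

For large `n` the hypothesis `1/(p + 1) + 1/(q + 1) ≥ 1 - 2/n + c₀/n²` with `c₀ > 2` and `p, q ≥ 1`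
implies `√(pq) * (n - 1) < n + 3`, which is that condition.

Bochner's formula involves third derivatives, whereas `w` is only `C²` with `Δw` of class `C¹`. So
the maximum principle is applied to mollifications of `w`, at maxima that converge to the given one.
-/

namespace LaneEmden

open Filter Topology Function
open scoped Convolution ContDiff

variable {n : ℕ}

section Calculus

variable {f g h : EuclideanSpace ℝ (Fin n) → ℝ} {x : EuclideanSpace ℝ (Fin n)}

/-- The partial derivative `∂ᵢf` at `x`, written so that `lap f x` unfolds to `∑ i, ∂ᵢ(∂ᵢf) x`.
As for `fderiv`, its value is `0` where `f` is not differentiable. -/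
noncomputable def partialDeriv (i : Fin n) (f : EuclideanSpace ℝ (Fin n) → ℝ)
    (x : EuclideanSpace ℝ (Fin n)) : ℝ :=
  fderiv ℝ f x (EuclideanSpace.single i 1)

theorem lap_eq_sum_partialDeriv (f : EuclideanSpace ℝ (Fin n) → ℝ)
    (x : EuclideanSpace ℝ (Fin n)) : lap f x = ∑ i, partialDeriv i (partialDeriv i f) x :=
  rfl

theorem contDiff_partialDeriv {m k : WithTop ℕ∞} (hf : ContDiff ℝ k f) (hmk : m + 1 ≤ k)
    (i : Fin n) : ContDiff ℝ m (partialDeriv i f) :=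
  (hf.fderiv_right hmk).clm_apply contDiff_const

theorem continuous_partialDeriv (hf : ContDiff ℝ 1 f) (i : Fin n) :
    Continuous (partialDeriv i f) :=
  (contDiff_partialDeriv (m := 0) hf (by simp) i).continuous

theorem differentiable_partialDeriv (hf : ContDiff ℝ 2 f) (i : Fin n) :
    Differentiable ℝ (partialDeriv i f) :=
  (contDiff_partialDeriv (m := 1) hf (by norm_num) i).differentiable one_ne_zero

theorem partialDeriv_const (c : ℝ) (i : Fin n) (x : EuclideanSpace ℝ (Fin n)) :
    partialDeriv i (fun _ => c) x = 0 := by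
  simp [partialDeriv]

theorem partialDeriv_add (hf : DifferentiableAt ℝ f x) (hg : DifferentiableAt ℝ g x)
    (i : Fin n) :
    partialDeriv i (fun y => f y + g y) x = partialDeriv i f x + partialDeriv i g x := by
  simp [partialDeriv, fderiv_fun_add hf hg]

theorem partialDeriv_sub (hf : DifferentiableAt ℝ f x) (hg : DifferentiableAt ℝ g x)
    (i : Fin n) :
    partialDeriv i (fun y => f y - g y) x = partialDeriv i f x - partialDeriv i g x := by
  simp [partialDeriv, fderiv_fun_sub hf hg]

theorem partialDeriv_mul (hf : DifferentiableAt ℝ f x) (hg : DifferentiableAt ℝ g x)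
    (i : Fin n) :
    partialDeriv i (fun y => f y * g y) x
      = partialDeriv i f x * g x + f x * partialDeriv i g x := by
  simp only [partialDeriv, fderiv_fun_mul hf hg, add_apply, smul_apply, smul_eq_mul]
  ring

theorem partialDeriv_const_mul (c : ℝ) (hf : DifferentiableAt ℝ f x) (i : Fin n) :
    partialDeriv i (fun y => c * f y) x = c * partialDeriv i f x := by
  simp [partialDeriv, fderiv_const_mul hf]

theorem partialDeriv_sum {ι : Type*} {s : Finset ι} {F : ι → EuclideanSpace ℝ (Fin n) → ℝ}
    (hF : ∀ j ∈ s, DifferentiableAt ℝ (F j) x) (i : Fin n) :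
    partialDeriv i (fun y => ∑ j ∈ s, F j y) x = ∑ j ∈ s, partialDeriv i (F j) x := by
  simp [partialDeriv, fderiv_fun_sum hF]

theorem partialDeriv_comp {φ : ℝ → ℝ} {d : ℝ} (hφ : HasDerivAt φ d (f x))
    (hf : DifferentiableAt ℝ f x) (i : Fin n) :
    partialDeriv i (fun y => φ (f y)) x = d * partialDeriv i f x := by
  have hcomp : HasFDerivAt (fun y => φ (f y)) (d • fderiv ℝ f x) x :=
    hφ.comp_hasFDerivAt x hf.hasFDerivAt
  simp [partialDeriv, hcomp.fderiv]

theorem partialDeriv_comm (hf : ContDiff ℝ 2 f) (i j : Fin n) (x : EuclideanSpace ℝ (Fin n)) :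
    partialDeriv i (partialDeriv j f) x = partialDeriv j (partialDeriv i f) x := by
  have hdiff : DifferentiableAt ℝ (fderiv ℝ f) x :=
    (hf.fderiv_right (m := 1) (by norm_num)).differentiable one_ne_zero x
  have hsecond (a b : EuclideanSpace ℝ (Fin n)) :
      fderiv ℝ (fun y => fderiv ℝ f y a) x b = fderiv ℝ (fderiv ℝ f) x b a := by
    simp [fderiv_clm_apply hdiff (differentiableAt_const a)]
  have hsymm : IsSymmSndFDerivAt ℝ f x := hf.contDiffAt.isSymmSndFDerivAt (by simp)
  exact (hsecond _ _).trans ((hsymm _ _).trans (hsecond _ _).symm)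

theorem partialDeriv_eq_zero_of_isLocalMax (hmax : IsLocalMax f x) (i : Fin n) :
    partialDeriv i f x = 0 := by
  simp [partialDeriv, hmax.fderiv_eq_zero]

theorem deriv_deriv_nonpos_of_isLocalMax {φ : ℝ → ℝ} {a : ℝ} (hφ : ContinuousAt φ a)
    (hmax : IsLocalMax φ a) : deriv (deriv φ) a ≤ 0 := by
  by_contra! hpos
  have hmin : IsLocalMin φ a := isLocalMin_of_deriv_deriv_pos hpos hmax.deriv_eq_zero hφ
  have hconst : φ =ᶠ[𝓝 a] fun _ => φ a := by
    filter_upwards [hmax, hmin] with t hle hge using le_antisymm hle hge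
  simp [hconst.deriv.deriv_eq] at hpos

theorem partialDeriv_partialDeriv_nonpos_of_isLocalMax (hf : ContDiff ℝ 2 f)
    (hmax : IsLocalMax f x) (i : Fin n) : partialDeriv i (partialDeriv i f) x ≤ 0 := by
  let line : ℝ → EuclideanSpace ℝ (Fin n) := fun t => x + t • EuclideanSpace.single i 1
  have hline (t : ℝ) : HasDerivAt line (EuclideanSpace.single i 1) t := by
    simpa [line] using ((hasDerivAt_id t).smul_const (EuclideanSpace.single i (1 : ℝ))).const_add x
  have hline0 : line 0 = x := by simp [line]
  have hderiv {F : EuclideanSpace ℝ (Fin n) → ℝ} (hF : Differentiable ℝ F) :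
      deriv (F ∘ line) = partialDeriv i F ∘ line :=
    funext fun t => ((hF (line t)).hasFDerivAt.comp_hasDerivAt t (hline t)).deriv
  have hcont : ContinuousAt line 0 := (hline 0).continuousAt
  have hmax_line : IsLocalMax (f ∘ line) 0 := by
    rw [← hline0] at hmax
    exact hmax.comp_continuous hcont
  have hsecond := deriv_deriv_nonpos_of_isLocalMax
    (hf.continuous.continuousAt.comp hcont) hmax_line
  rwa [hderiv (hf.differentiable two_ne_zero), hderiv (differentiable_partialDeriv hf i),
    comp_apply, hline0] at hsecond

theorem lap_nonpos_of_isLocalMax (hf : ContDiff ℝ 2 f) (hmax : IsLocalMax f x) : lap f x ≤ 0 :=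
  Finset.sum_nonpos fun i _ => partialDeriv_partialDeriv_nonpos_of_isLocalMax hf hmax i

theorem continuous_lap (hf : ContDiff ℝ 2 f) : Continuous (lap f) :=
  continuous_finsetSum _ fun i _ =>
    continuous_partialDeriv (contDiff_partialDeriv hf (by norm_num) i) i

/-- The inner product `∇f · ∇g` of the gradients of `f` and `g` at `x` (the carré du champ of the
Laplacian); `gradInner f f` is `|∇f|²`. -/
noncomputable def gradInner (f g : EuclideanSpace ℝ (Fin n) → ℝ)
    (x : EuclideanSpace ℝ (Fin n)) : ℝ :=
  ∑ i, partialDeriv i f x * partialDeriv i g x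

/-- The squared Hilbert–Schmidt norm `|D²f|²` of the Hessian of `f` at `x`. -/
noncomputable def hessSq (f : EuclideanSpace ℝ (Fin n) → ℝ)
    (x : EuclideanSpace ℝ (Fin n)) : ℝ :=
  ∑ i, ∑ j, partialDeriv i (partialDeriv j f) x ^ 2

theorem contDiff_gradInner {m k : WithTop ℕ∞} (hf : ContDiff ℝ k f) (hg : ContDiff ℝ k g)
    (hmk : m + 1 ≤ k) : ContDiff ℝ m (gradInner f g) :=
  ContDiff.sum fun i _ =>
    (contDiff_partialDeriv hf hmk i).mul (contDiff_partialDeriv hg hmk i)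

theorem gradInner_comm (f g : EuclideanSpace ℝ (Fin n) → ℝ) (x : EuclideanSpace ℝ (Fin n)) :
    gradInner f g x = gradInner g f x := by
  simp only [gradInner, mul_comm]

theorem gradInner_self_nonneg (f : EuclideanSpace ℝ (Fin n) → ℝ)
    (x : EuclideanSpace ℝ (Fin n)) : 0 ≤ gradInner f f x :=
  Finset.sum_nonneg fun _ _ => mul_self_nonneg _

theorem one_le_of_gradInner_self_pos (hf : 0 < gradInner f f x) : (1 : ℝ) ≤ n := by
  have hn : n ≠ 0 := by
    rintro rfl
    simp [gradInner] at hf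
  exact Nat.one_le_cast.2 (Nat.one_le_iff_ne_zero.2 hn)

theorem partialDeriv_eq_zero_of_gradInner_self_eq_zero (hf : gradInner f f x = 0) (i : Fin n) :
    partialDeriv i f x = 0 :=
  mul_self_eq_zero.1 <|
    (Finset.sum_eq_zero_iff_of_nonneg fun _ _ => mul_self_nonneg _).1 hf i (Finset.mem_univ i)

theorem gradInner_sq_le (f g : EuclideanSpace ℝ (Fin n) → ℝ) (x : EuclideanSpace ℝ (Fin n)) :
    gradInner f g x ^ 2 ≤ gradInner f f x * gradInner g g x := by
  simpa only [gradInner, sq] using Finset.sum_mul_sq_le_sq_mul_sq Finset.univ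
    (fun i => partialDeriv i f x) (fun i => partialDeriv i g x)

theorem gradInner_sub_right (hg : DifferentiableAt ℝ g x) (hh : DifferentiableAt ℝ h x) :
    gradInner f (fun y => g y - h y) x = gradInner f g x - gradInner f h x := by
  simp only [gradInner, partialDeriv_sub hg hh, mul_sub, Finset.sum_sub_distrib]

theorem gradInner_const_mul_right (c : ℝ) (hg : DifferentiableAt ℝ g x) :
    gradInner f (fun y => c * g y) x = c * gradInner f g x := by
  simp only [gradInner, partialDeriv_const_mul c hg, Finset.mul_sum]
  exact Finset.sum_congr rfl fun i _ => by ring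

theorem gradInner_comp_right {φ : ℝ → ℝ} {d : ℝ} (hφ : HasDerivAt φ d (g x))
    (hg : DifferentiableAt ℝ g x) :
    gradInner f (fun y => φ (g y)) x = d * gradInner f g x := by
  simp only [gradInner, partialDeriv_comp hφ hg, Finset.mul_sum]
  exact Finset.sum_congr rfl fun i _ => by ring

theorem gradInner_mul_right (hg : DifferentiableAt ℝ g x) (hh : DifferentiableAt ℝ h x) :
    gradInner f (fun y => g y * h y) x
      = gradInner f g x * h x + g x * gradInner f h x := by
  simp only [gradInner, partialDeriv_mul hg hh, Finset.sum_mul, Finset.mul_sum,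
    ← Finset.sum_add_distrib]
  exact Finset.sum_congr rfl fun i _ => by ring

theorem gradInner_eq_zero_of_isLocalMax (f : EuclideanSpace ℝ (Fin n) → ℝ)
    (hmax : IsLocalMax g x) : gradInner f g x = 0 := by
  simp [gradInner, partialDeriv_eq_zero_of_isLocalMax hmax]

theorem lap_sub (hf : ContDiff ℝ 2 f) (hg : ContDiff ℝ 2 g) (x : EuclideanSpace ℝ (Fin n)) :
    lap (fun y => f y - g y) x = lap f x - lap g x := by
  simp only [lap_eq_sum_partialDeriv, ← Finset.sum_sub_distrib]
  refine Finset.sum_congr rfl fun i _ => ?_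
  rw [funext fun y => partialDeriv_sub (hf.differentiable two_ne_zero y)
      (hg.differentiable two_ne_zero y) i,
    partialDeriv_sub (differentiable_partialDeriv hf i x) (differentiable_partialDeriv hg i x)]

theorem lap_sum {ι : Type*} {s : Finset ι} {F : ι → EuclideanSpace ℝ (Fin n) → ℝ}
    (hF : ∀ j ∈ s, ContDiff ℝ 2 (F j)) (x : EuclideanSpace ℝ (Fin n)) :
    lap (fun y => ∑ j ∈ s, F j y) x = ∑ j ∈ s, lap (F j) x := by
  simp only [lap_eq_sum_partialDeriv]
  rw [Finset.sum_comm]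
  refine Finset.sum_congr rfl fun i _ => ?_
  rw [funext fun y => partialDeriv_sum (fun j hj => (hF j hj).differentiable two_ne_zero y) i,
    partialDeriv_sum fun j hj => differentiable_partialDeriv (hF j hj) i x]

theorem lap_mul (hf : ContDiff ℝ 2 f) (hg : ContDiff ℝ 2 g) (x : EuclideanSpace ℝ (Fin n)) :
    lap (fun y => f y * g y) x = lap f x * g x + 2 * gradInner f g x + f x * lap g x := by
  have hdf := hf.differentiable two_ne_zero
  have hdg := hg.differentiable two_ne_zero
  have hterm (i : Fin n) : partialDeriv i (partialDeriv i fun y => f y * g y) x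
      = partialDeriv i (partialDeriv i f) x * g x
        + 2 * (partialDeriv i f x * partialDeriv i g x)
        + f x * partialDeriv i (partialDeriv i g) x := by
    have hdfi := differentiable_partialDeriv hf i
    have hdgi := differentiable_partialDeriv hg i
    rw [funext fun y => partialDeriv_mul (hdf y) (hdg y) i,
      partialDeriv_add ((hdfi.fun_mul hdg) x) ((hdf.fun_mul hdgi) x),
      partialDeriv_mul (hdfi x) (hdg x), partialDeriv_mul (hdf x) (hdgi x)]
    ring
  simp only [lap_eq_sum_partialDeriv, gradInner, hterm, Finset.sum_add_distrib,
    Finset.sum_mul, Finset.mul_sum]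

end Calculus

section Bochner

variable {w η : EuclideanSpace ℝ (Fin n) → ℝ}

theorem partialDeriv_gradInner_self (hw : ContDiff ℝ 2 w) (k : Fin n)
    (x : EuclideanSpace ℝ (Fin n)) :
    partialDeriv k (gradInner w w) x
      = 2 * ∑ j, partialDeriv j w x * partialDeriv k (partialDeriv j w) x := by
  have hd (j : Fin n) : DifferentiableAt ℝ (partialDeriv j w) x :=
    differentiable_partialDeriv hw j x
  calc partialDeriv k (gradInner w w) x
      = ∑ j, partialDeriv k (fun y => partialDeriv j w y * partialDeriv j w y) x :=
        partialDeriv_sum (fun j _ => (hd j).fun_mul (hd j)) k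
    _ = 2 * ∑ j, partialDeriv j w x * partialDeriv k (partialDeriv j w) x := by
        rw [Finset.mul_sum]
        exact Finset.sum_congr rfl fun j _ => by rw [partialDeriv_mul (hd j) (hd j)]; ring

theorem lap_partialDeriv (hw : ContDiff ℝ 3 w) (j : Fin n) (x : EuclideanSpace ℝ (Fin n)) :
    lap (partialDeriv j w) x = partialDeriv j (lap w) x := by
  have hw2 : ContDiff ℝ 2 w := hw.of_le (by norm_num)
  have hdw (i : Fin n) : ContDiff ℝ 2 (partialDeriv i w) := contDiff_partialDeriv hw (by norm_num) i
  calc lap (partialDeriv j w) x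
      = ∑ i, partialDeriv j (partialDeriv i (partialDeriv i w)) x :=
        Finset.sum_congr rfl fun i _ => by
          rw [← partialDeriv_comm (hdw i) i j, ← funext (partialDeriv_comm hw2 i j)]; rfl
    _ = partialDeriv j (lap w) x :=
        (partialDeriv_sum (fun i _ => differentiable_partialDeriv (hdw i) i x) j).symm

theorem lap_gradInner_self (hw : ContDiff ℝ 3 w) (x : EuclideanSpace ℝ (Fin n)) :
    lap (gradInner w w) x = 2 * hessSq w x + 2 * gradInner w (lap w) x := by
  have hdw (j : Fin n) : ContDiff ℝ 2 (partialDeriv j w) := contDiff_partialDeriv hw (by norm_num) j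
  have hlap (j : Fin n) : lap (fun y => partialDeriv j w y * partialDeriv j w y) x
      = 2 * ∑ k, partialDeriv k (partialDeriv j w) x ^ 2
        + 2 * (partialDeriv j w x * partialDeriv j (lap w) x) := by
    rw [lap_mul (hdw j) (hdw j), lap_partialDeriv hw, gradInner]
    simp only [← sq]
    ring
  have hsum : lap (gradInner w w) x
      = ∑ j, lap (fun y => partialDeriv j w y * partialDeriv j w y) x :=
    lap_sum (fun j _ => (hdw j).mul (hdw j)) x
  rw [hsum, hessSq, Finset.sum_comm, gradInner]
  simp only [hlap, Finset.sum_add_distrib, Finset.mul_sum]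

/-- The expression that the Leibniz rule and the Bochner formula give for `Δ(η |∇w|²)`. Unlike that
Laplacian it makes sense as soon as `w` is `C²` with `Δw` of class `C¹`. -/
noncomputable def bochnerExpr (η w : EuclideanSpace ℝ (Fin n) → ℝ)
    (x : EuclideanSpace ℝ (Fin n)) : ℝ :=
  lap η x * gradInner w w x + 2 * gradInner η (gradInner w w) x
    + η x * (2 * hessSq w x + 2 * gradInner w (lap w) x)

theorem lap_mul_gradInner_self (hη : ContDiff ℝ 2 η) (hw : ContDiff ℝ 3 w)
    (x : EuclideanSpace ℝ (Fin n)) :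
    lap (fun y => η y * gradInner w w y) x = bochnerExpr η w x := by
  rw [lap_mul hη (contDiff_gradInner hw hw (by norm_num)), lap_gradInner_self hw, bochnerExpr]

end Bochner

theorem frequently_isLocalMax_of_tendsto {X Y ι : Type*} [TopologicalSpace X]
    [LocallyCompactSpace X] [LinearOrder Y] [TopologicalSpace Y] [OrderClosedTopology Y]
    {l : Filter ι} [l.NeBot] {F : X → Y} {Fs : ι → X → Y} {x₀ : X}
    (hcont : ∀ i, Continuous (Fs i))
    (hlim : ∀ x, Tendsto (uncurry Fs) (l ×ˢ 𝓝 x) (𝓝 (F x)))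
    (hmax : ∀ᶠ x in 𝓝[≠] x₀, F x < F x₀) :
    ∃ᶠ z in l ×ˢ 𝓝 x₀, IsLocalMax (Fs z.1) z.2 := by
  refine frequently_iff.2 fun {A} hA => ?_
  obtain ⟨I, hI, V, hV, hIV⟩ := mem_prod_iff.1 hA
  have hU : {x | x ≠ x₀ → F x < F x₀} ∈ 𝓝 x₀ := eventually_nhdsWithin_iff.1 hmax
  obtain ⟨K, hK, hKV, hK_compact⟩ := local_compact_nhds (inter_mem hV hU)
  have hx₀ : x₀ ∈ interior K := mem_interior_iff_mem_nhds.2 hK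
  have hlim₀ : Tendsto (fun i => Fs i x₀) l (𝓝 (F x₀)) :=
    (hlim x₀).comp (tendsto_id.prodMk tendsto_const_nhds)
  have hboundary : ∀ᶠ i in l, ∀ y ∈ K \ interior K, Fs i y < Fs i x₀ := by
    refine (Eventually.curry ((hK_compact.diff isOpen_interior).mem_prod_nhdsSet_of_forall
      (s := {z | Fs z.1 z.2 < Fs z.1 x₀}) fun y hy => ?_)).mono fun i hi => hi.self_of_nhdsSet
    have hyx₀ : y ≠ x₀ := fun h => hy.2 (h ▸ hx₀)
    exact (hlim y).eventually_lt (hlim₀.comp tendsto_fst) ((hKV hy.1).2 hyx₀)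
  obtain ⟨i, hi_lt, hi⟩ := (hboundary.and hI).exists
  obtain ⟨y, hyK, hy⟩ := hK_compact.exists_isMaxOn ⟨x₀, interior_subset hx₀⟩ (hcont i).continuousOn
  have hy_int : y ∈ interior K := by
    by_contra hy'
    exact (hy (interior_subset hx₀)).not_gt (hi_lt y ⟨hyK, hy'⟩)
  exact ⟨(i, y), hIV ⟨hi, (hKV hyK).1⟩, hy.isLocalMax (mem_interior_iff_mem_nhds.1 hy_int)⟩

section Mollification

/-- The mollification `φ ⋆ g` of `g` by the bump function `φ`, normalised to have integral `1`. -/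
noncomputable def mollify (φ : ContDiffBump (0 : EuclideanSpace ℝ (Fin n)))
    (g : EuclideanSpace ℝ (Fin n) → ℝ) : EuclideanSpace ℝ (Fin n) → ℝ :=
  φ.normed volume ⋆[ContinuousLinearMap.lsmul ℝ ℝ, volume] g

variable {f g w η : EuclideanSpace ℝ (Fin n) → ℝ}

theorem contDiff_mollify (φ : ContDiffBump (0 : EuclideanSpace ℝ (Fin n))) (hg : Continuous g) :
    ContDiff ℝ ∞ (mollify φ g) :=
  φ.hasCompactSupport_normed.contDiff_convolution_left _ φ.contDiff_normed hg.locallyIntegrable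

theorem partialDeriv_mollify (φ : ContDiffBump (0 : EuclideanSpace ℝ (Fin n)))
    (hg : ContDiff ℝ 1 g) (i : Fin n) :
    partialDeriv i (mollify φ g) = mollify φ (partialDeriv i g) := by
  funext x
  let e : EuclideanSpace ℝ (Fin n) := EuclideanSpace.single i 1
  let k : EuclideanSpace ℝ (Fin n) → ℝ := φ.normed volume
  have hk : ContDiff ℝ 1 k := φ.contDiff_normed
  have hk_supp : HasCompactSupport k := φ.hasCompactSupport_normed
  have hdk : Continuous (fderiv ℝ k) := hk.continuous_fderiv one_ne_zero
  have hgx : ContDiff ℝ 1 fun t => g (x - t) := by fun_prop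
  have hdgx : Continuous (fderiv ℝ fun t => g (x - t)) := hgx.continuous_fderiv one_ne_zero
  have hderiv : partialDeriv i (mollify φ g) x = ∫ t, fderiv ℝ k t e * g (x - t) := by
    have hmollify : HasFDerivAt (mollify φ g) _ x :=
      hk_supp.hasFDerivAt_convolution_left _ hk hg.continuous.locallyIntegrable x
    rw [partialDeriv, hmollify.fderiv, convolution_def, ContinuousLinearMap.integral_apply]
    · rfl
    · exact (hk_supp.fderiv ℝ).convolutionExists_left _ hdk hg.continuous.locallyIntegrable x
  have hparts : ∫ t, k t * fderiv ℝ (fun s => g (x - s)) t e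
      = -∫ t, fderiv ℝ k t e * g (x - t) :=
    integral_mul_fderiv_eq_neg_fderiv_mul_of_integrable
      (Continuous.integrable_of_hasCompactSupport (by fun_prop)
        ((hk_supp.fderiv_apply (𝕜 := ℝ) e).mul_right))
      ((hk.continuous.mul (hdgx.clm_apply continuous_const)).integrable_of_hasCompactSupport
        hk_supp.mul_right)
      (Continuous.integrable_of_hasCompactSupport (by fun_prop) hk_supp.mul_right)
      (fun t _ => hk.differentiable one_ne_zero t) (fun t _ => hgx.differentiable one_ne_zero t)
  have hreflect (t : EuclideanSpace ℝ (Fin n)) :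
      fderiv ℝ (fun s => g (x - s)) t e = -partialDeriv i g (x - t) := by
    have hcomp : HasFDerivAt (fun s => g (x - s)) _ t :=
      (hg.differentiable one_ne_zero (x - t)).hasFDerivAt.comp t ((hasFDerivAt_id t).const_sub x)
    simp [hcomp.fderiv, partialDeriv, e]
  rw [hderiv, ← neg_eq_iff_eq_neg.2 hparts, ← integral_neg]
  exact integral_congr_ae (Eventually.of_forall fun t => by simp [hreflect, k])

theorem mollify_sum (φ : ContDiffBump (0 : EuclideanSpace ℝ (Fin n))) {ι : Type*} {s : Finset ι}
    {F : ι → EuclideanSpace ℝ (Fin n) → ℝ} (hF : ∀ j ∈ s, Continuous (F j))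
    (x : EuclideanSpace ℝ (Fin n)) :
    mollify φ (fun y => ∑ j ∈ s, F j y) x = ∑ j ∈ s, mollify φ (F j) x := by
  simp only [mollify, convolution_def, map_sum]
  exact integral_finsetSum _ fun j hj => φ.hasCompactSupport_normed.convolutionExists_left _
    φ.continuous_normed (hF j hj).locallyIntegrable x

theorem lap_mollify (φ : ContDiffBump (0 : EuclideanSpace ℝ (Fin n))) (hw : ContDiff ℝ 2 w) :
    lap (mollify φ w) = mollify φ (lap w) := by
  funext x
  calc lap (mollify φ w) x = ∑ i, mollify φ (partialDeriv i (partialDeriv i w)) x := by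
        refine Finset.sum_congr rfl fun i _ => ?_
        rw [← partialDeriv_mollify φ (contDiff_partialDeriv hw (by norm_num) i),
          ← partialDeriv_mollify φ (hw.of_le (by norm_num))]
        rfl
    _ = mollify φ (lap w) x :=
        (mollify_sum φ (fun i _ =>
          continuous_partialDeriv (contDiff_partialDeriv hw (by norm_num) i) i) x).symm

variable {ι : Type*} {l : Filter ι} {φ : ι → ContDiffBump (0 : EuclideanSpace ℝ (Fin n))}

theorem tendsto_mollify (hφ : Tendsto (fun i => (φ i).rOut) l (𝓝 0)) (hg : Continuous g)
    (x : EuclideanSpace ℝ (Fin n)) :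
    Tendsto (fun z : ι × EuclideanSpace ℝ (Fin n) => mollify (φ z.1) g z.2) (l ×ˢ 𝓝 x)
      (𝓝 (g x)) :=
  ContDiffBump.convolution_tendsto_right (φ := fun z : ι × EuclideanSpace ℝ (Fin n) => φ z.1)
    (g := fun _ => g) (hφ.comp tendsto_fst)
    (Eventually.of_forall fun _ => hg.aestronglyMeasurable) ((hg.tendsto x).comp tendsto_snd)
    tendsto_snd

theorem tendsto_partialDeriv_mollify (hφ : Tendsto (fun i => (φ i).rOut) l (𝓝 0))
    (hg : ContDiff ℝ 1 g) (j : Fin n) (x : EuclideanSpace ℝ (Fin n)) :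
    Tendsto (fun z : ι × EuclideanSpace ℝ (Fin n) => partialDeriv j (mollify (φ z.1) g) z.2)
      (l ×ˢ 𝓝 x) (𝓝 (partialDeriv j g x)) := by
  simpa only [partialDeriv_mollify _ hg] using tendsto_mollify hφ (continuous_partialDeriv hg j) x

theorem tendsto_gradInner_mollify (hφ : Tendsto (fun i => (φ i).rOut) l (𝓝 0))
    (hf : ContDiff ℝ 1 f) (hg : ContDiff ℝ 1 g) (x : EuclideanSpace ℝ (Fin n)) :
    Tendsto (fun z : ι × EuclideanSpace ℝ (Fin n) =>
      gradInner (mollify (φ z.1) f) (mollify (φ z.1) g) z.2) (l ×ˢ 𝓝 x) (𝓝 (gradInner f g x)) :=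
  tendsto_finsetSum _ fun j _ =>
    (tendsto_partialDeriv_mollify hφ hf j x).mul (tendsto_partialDeriv_mollify hφ hg j x)

theorem tendsto_partialDeriv_partialDeriv_mollify (hφ : Tendsto (fun i => (φ i).rOut) l (𝓝 0))
    (hw : ContDiff ℝ 2 w) (j k : Fin n) (x : EuclideanSpace ℝ (Fin n)) :
    Tendsto (fun z : ι × EuclideanSpace ℝ (Fin n) =>
      partialDeriv k (partialDeriv j (mollify (φ z.1) w)) z.2)
      (l ×ˢ 𝓝 x) (𝓝 (partialDeriv k (partialDeriv j w) x)) := by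
  simpa only [partialDeriv_mollify _ (hw.of_le one_le_two)] using
    tendsto_partialDeriv_mollify hφ (contDiff_partialDeriv hw (by norm_num) j) k x

theorem tendsto_bochnerExpr_mollify (hφ : Tendsto (fun i => (φ i).rOut) l (𝓝 0))
    (hη : ContDiff ℝ 2 η) (hw : ContDiff ℝ 2 w) (hlap : ContDiff ℝ 1 (lap w))
    (x : EuclideanSpace ℝ (Fin n)) :
    Tendsto (fun z : ι × EuclideanSpace ℝ (Fin n) => bochnerExpr η (mollify (φ z.1) w) z.2)
      (l ×ˢ 𝓝 x) (𝓝 (bochnerExpr η w x)) := by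
  have hw1 : ContDiff ℝ 1 w := hw.of_le one_le_two
  have hW (i : ι) : ContDiff ℝ 2 (mollify (φ i) w) := by
    exact_mod_cast contDiff_infty.1 (contDiff_mollify (φ i) hw.continuous) 2
  have hfixed {F : EuclideanSpace ℝ (Fin n) → ℝ} (hF : Continuous F) :
      Tendsto (fun z : ι × EuclideanSpace ℝ (Fin n) => F z.2) (l ×ˢ 𝓝 x) (𝓝 (F x)) :=
    (hF.tendsto x).comp tendsto_snd
  have hgrad := tendsto_gradInner_mollify hφ hw1 hw1 x
  have hhess : Tendsto (fun z : ι × EuclideanSpace ℝ (Fin n) => hessSq (mollify (φ z.1) w) z.2)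
      (l ×ˢ 𝓝 x) (𝓝 (hessSq w x)) :=
    tendsto_finsetSum _ fun k _ => tendsto_finsetSum _ fun j _ =>
      (tendsto_partialDeriv_partialDeriv_mollify hφ hw j k x).pow 2
  have hgrad_lap : Tendsto (fun z : ι × EuclideanSpace ℝ (Fin n) =>
      gradInner (mollify (φ z.1) w) (lap (mollify (φ z.1) w)) z.2)
      (l ×ˢ 𝓝 x) (𝓝 (gradInner w (lap w) x)) := by
    simpa only [lap_mollify _ hw] using tendsto_gradInner_mollify hφ hw1 hlap x
  have hcross : Tendsto (fun z : ι × EuclideanSpace ℝ (Fin n) =>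
      gradInner η (gradInner (mollify (φ z.1) w) (mollify (φ z.1) w)) z.2)
      (l ×ˢ 𝓝 x) (𝓝 (gradInner η (gradInner w w) x)) := by
    simp only [gradInner.eq_def η, partialDeriv_gradInner_self (hW _),
      partialDeriv_gradInner_self hw]
    exact tendsto_finsetSum _ fun k _ =>
      (hfixed (continuous_partialDeriv (hη.of_le one_le_two) k)).mul <|
        (tendsto_finsetSum _ fun j _ => (tendsto_partialDeriv_mollify hφ hw1 j x).mul
          (tendsto_partialDeriv_partialDeriv_mollify hφ hw j k x)).const_mul 2
  exact (((hfixed (continuous_lap hη)).mul hgrad).add (hcross.const_mul 2)).add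
    ((hfixed hη.continuous).mul ((hhess.const_mul 2).add (hgrad_lap.const_mul 2)))

end Mollification

section NormSq

variable (c x : EuclideanSpace ℝ (Fin n))

theorem contDiff_norm_sub_sq {k : WithTop ℕ∞} (c : EuclideanSpace ℝ (Fin n)) :
    ContDiff ℝ k fun x => ‖x - c‖ ^ 2 :=
  (contDiff_id.sub contDiff_const).norm_sq ℝ

theorem partialDeriv_norm_sub_sq (i : Fin n) :
    partialDeriv i (fun y => ‖y - c‖ ^ 2) x = 2 * (x i - c i) := by
  have hderiv : HasFDerivAt (fun y => ‖y - c‖ ^ 2) _ x :=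
    ((hasFDerivAt_id x).sub_const c).norm_sq
  simp [partialDeriv, hderiv.fderiv, EuclideanSpace.inner_single_right]

theorem gradInner_norm_sub_sq_self :
    gradInner (fun y => ‖y - c‖ ^ 2) (fun y => ‖y - c‖ ^ 2) x = 4 * ‖x - c‖ ^ 2 := by
  rw [gradInner, EuclideanSpace.real_norm_sq_eq, Finset.mul_sum]
  simp only [partialDeriv_norm_sub_sq, PiLp.sub_apply]
  exact Finset.sum_congr rfl fun i _ => by ring

theorem lap_norm_sub_sq : lap (fun y => ‖y - c‖ ^ 2) x = 2 * n := by
  have hcoord (i : Fin n) : partialDeriv i (fun y => 2 * (y i - c i)) x = 2 := by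
    have hderiv : HasFDerivAt (fun y : EuclideanSpace ℝ (Fin n) => 2 * (y i - c i)) _ x :=
      ((EuclideanSpace.proj i : EuclideanSpace ℝ (Fin n) →L[ℝ] ℝ).hasFDerivAt.sub_const
        (c i)).const_mul 2
    simp [partialDeriv, hderiv.fderiv]
  have hterm (i : Fin n) : partialDeriv i (partialDeriv i fun y => ‖y - c‖ ^ 2) x = 2 := by
    rw [funext fun y => partialDeriv_norm_sub_sq c y i, hcoord]
  simp [lap_eq_sum_partialDeriv, hterm, mul_comm]

theorem lap_norm_sub_sq_mul_self :
    lap (fun y => ‖y - c‖ ^ 2 * ‖y - c‖ ^ 2) c = 0 := by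
  simp [lap_mul (contDiff_norm_sub_sq c) (contDiff_norm_sub_sq c), gradInner_norm_sub_sq_self]

end NormSq

section BochnerMax

variable {w η ψ : EuclideanSpace ℝ (Fin n) → ℝ} {x₀ : EuclideanSpace ℝ (Fin n)}

theorem exists_contDiffBump_tendsto_rOut_zero :
    ∃ φ : ℕ → ContDiffBump (0 : EuclideanSpace ℝ (Fin n)),
      Tendsto (fun i => (φ i).rOut) atTop (𝓝 0) := by
  refine ⟨fun i => ⟨1 / (i + 1) / 2, 1 / (i + 1), by positivity, half_lt_self (by positivity)⟩, ?_⟩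
  exact tendsto_one_div_add_atTop_nhds_zero_nat

theorem bochnerExpr_le_lap_of_strict_localMax (hη : ContDiff ℝ 2 η) (hw : ContDiff ℝ 2 w)
    (hlap : ContDiff ℝ 1 (lap w)) (hψ : ContDiff ℝ 2 ψ)
    (hmax : ∀ᶠ x in 𝓝[≠] x₀,
      η x * gradInner w w x - ψ x < η x₀ * gradInner w w x₀ - ψ x₀) :
    bochnerExpr η w x₀ ≤ lap ψ x₀ := by
  obtain ⟨φ, hφ⟩ := exists_contDiffBump_tendsto_rOut_zero (n := n)
  let W (i : ℕ) : EuclideanSpace ℝ (Fin n) → ℝ := mollify (φ i) w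
  have hW (i : ℕ) : ContDiff ℝ 3 (W i) := by
    exact_mod_cast contDiff_infty.1 (contDiff_mollify (φ i) hw.continuous) 3
  have hηP (i : ℕ) : ContDiff ℝ 2 fun x => η x * gradInner (W i) (W i) x :=
    hη.mul (contDiff_gradInner (hW i) (hW i) (by norm_num))
  have hlap_le {i : ℕ} {y : EuclideanSpace ℝ (Fin n)}
      (hy : IsLocalMax (fun x => η x * gradInner (W i) (W i) x - ψ x) y) :
      bochnerExpr η (W i) y ≤ lap ψ y := by
    have hnonpos := lap_nonpos_of_isLocalMax ((hηP i).sub hψ) hy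
    rwa [lap_sub (hηP i) hψ, lap_mul_gradInner_self hη (hW i), sub_nonpos] at hnonpos
  have hw1 : ContDiff ℝ 1 w := hw.of_le one_le_two
  have hmaxima : ∃ᶠ z in atTop ×ˢ 𝓝 x₀,
      IsLocalMax (fun x => η x * gradInner (W z.1) (W z.1) x - ψ x) z.2 :=
    frequently_isLocalMax_of_tendsto (fun i => ((hηP i).sub hψ).continuous)
      (fun x => (((hη.continuous.tendsto x).comp tendsto_snd).mul
        (tendsto_gradInner_mollify hφ hw1 hw1 x)).sub ((hψ.continuous.tendsto x).comp tendsto_snd))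
      hmax
  exact le_of_tendsto_of_tendsto_of_frequently (tendsto_bochnerExpr_mollify hφ hη hw hlap x₀)
    (((continuous_lap hψ).tendsto x₀).comp tendsto_snd) (hmaxima.mono fun z hz => hlap_le hz)

theorem bochnerExpr_nonpos_of_isLocalMax (hη : ContDiff ℝ 2 η) (hw : ContDiff ℝ 2 w)
    (hlap : ContDiff ℝ 1 (lap w)) (hmax : IsLocalMax (fun x => η x * gradInner w w x) x₀) :
    bochnerExpr η w x₀ ≤ 0 := by
  -- Subtracting `|x - x₀|⁴` makes the maximum strict and does not affect the Laplacian at `x₀`.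
  have hψ : ContDiff ℝ 2 fun x => ‖x - x₀‖ ^ 2 * ‖x - x₀‖ ^ 2 :=
    (contDiff_norm_sub_sq x₀).mul (contDiff_norm_sub_sq x₀)
  rw [← lap_norm_sub_sq_mul_self x₀]
  refine bochnerExpr_le_lap_of_strict_localMax hη hw hlap hψ ?_
  filter_upwards [hmax.filter_mono nhdsWithin_le_nhds, self_mem_nhdsWithin] with x hx hne
  have hpos : 0 < ‖x - x₀‖ := norm_sub_pos_iff.2 hne
  have hpos4 : 0 < ‖x - x₀‖ ^ 2 * ‖x - x₀‖ ^ 2 := by positivity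
  simp only [sub_self, norm_zero]
  linarith

end BochnerMax

section TraceInequality

open scoped Matrix

theorem sq_trace_sub_le {ι : Type*} [Fintype ι] (H : Matrix ι ι ℝ) {v : ι → ℝ} {a : ℝ}
    (hv : v ≠ 0) (ha : v ⬝ᵥ H *ᵥ v = a * (v ⬝ᵥ v)) :
    (H.trace - a) ^ 2 ≤ (Fintype.card ι - 1) * ∑ i, ∑ j, H i j ^ 2 := by
  classical
  have hP : v ⬝ᵥ v ≠ 0 := dotProduct_self_eq_zero.not.2 hv
  -- the projection onto the orthogonal complement of `v`, of rank `card ι - 1`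
  let B : Matrix ι ι ℝ := 1 - (v ⬝ᵥ v)⁻¹ • Matrix.vecMulVec v v
  have hB (i j : ι) : B i j = (if i = j then 1 else 0) - (v ⬝ᵥ v)⁻¹ * (v i * v j) := by
    simp [B, Matrix.one_apply, Matrix.vecMulVec_apply]
  have hHB : ∑ i, ∑ j, H i j * B i j = H.trace - a := by
    have hsum : ∑ i, ∑ j, H i j * ((v ⬝ᵥ v)⁻¹ * (v i * v j)) = (v ⬝ᵥ v)⁻¹ * (v ⬝ᵥ H *ᵥ v) := by
      simp only [dotProduct, Matrix.mulVec, Finset.mul_sum]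
      exact Finset.sum_congr rfl fun i _ => Finset.sum_congr rfl fun j _ => by ring
    simp only [hB, mul_sub, Finset.sum_sub_distrib, hsum, ha]
    simp [Matrix.trace, mul_comm a, hP]
  have hBB : ∑ i, ∑ j, B i j ^ 2 = Fintype.card ι - 1 := by
    have hsum : ∑ i, ∑ j, (v i * v j) ^ 2 = (v ⬝ᵥ v) ^ 2 := by
      simp only [dotProduct, sq, Finset.sum_mul_sum]
      exact Finset.sum_congr rfl fun i _ => Finset.sum_congr rfl fun j _ => by ring
    have hdiag : ∑ i, ∑ j, (if i = j then 1 else 0) * (v i * v j) = v ⬝ᵥ v := by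
      simp [dotProduct]
    have hexpand (i j : ι) : B i j ^ 2 = (if i = j then 1 else 0)
        - 2 * (v ⬝ᵥ v)⁻¹ * ((if i = j then 1 else 0) * (v i * v j))
        + (v ⬝ᵥ v)⁻¹ ^ 2 * (v i * v j) ^ 2 := by
      rw [hB]; split_ifs <;> ring
    simp only [hexpand, Finset.sum_add_distrib, Finset.sum_sub_distrib, ← Finset.mul_sum, hsum,
      hdiag]
    simp only [Finset.sum_ite_eq, Finset.mem_univ, ↓reduceIte, Finset.sum_const, Finset.card_univ,
      nsmul_eq_mul, mul_one]
    field_simp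
    ring
  have hcs := Finset.sum_mul_sq_le_sq_mul_sq Finset.univ
    (fun z : ι × ι => H z.1 z.2) (fun z => B z.1 z.2)
  simp only [Fintype.sum_prod_type, hHB, hBB] at hcs
  rwa [mul_comm]

theorem sq_lap_sub_le_mul_hessSq {w : EuclideanSpace ℝ (Fin n) → ℝ}
    {x : EuclideanSpace ℝ (Fin n)} (hw : ContDiff ℝ 2 w) (hP : gradInner w w x ≠ 0) :
    (lap w x - gradInner w (gradInner w w) x / (2 * gradInner w w x)) ^ 2
      ≤ (n - 1) * hessSq w x := by
  let H : Matrix (Fin n) (Fin n) ℝ := Matrix.of fun k j => partialDeriv k (partialDeriv j w) x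
  let v : Fin n → ℝ := fun k => partialDeriv k w x
  have hv : v ≠ 0 := fun hv => hP (dotProduct_self_eq_zero.2 hv)
  have hHess : v ⬝ᵥ H *ᵥ v
      = gradInner w (gradInner w w) x / (2 * gradInner w w x) * (v ⬝ᵥ v) := by
    have hvv : v ⬝ᵥ v = gradInner w w x := rfl
    have hΓ : gradInner w (gradInner w w) x = 2 * (v ⬝ᵥ H *ᵥ v) := by
      rw [gradInner]
      simp only [partialDeriv_gradInner_self hw, dotProduct, Matrix.mulVec, Finset.mul_sum]
      exact Finset.sum_congr rfl fun k _ => Finset.sum_congr rfl fun j _ => by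
        simp only [v, H, Matrix.of_apply]; ring
    rw [hvv, hΓ]
    field_simp
  have htrace := sq_trace_sub_le H hv hHess
  rwa [Fintype.card_fin] at htrace

end TraceInequality

section GradientEstimate

/- In the application `P = |∇w|²`, `HH = |D²w|²`, `f` is the source term `-Δw - |∇w|²` and
`a = D²w(∇w, ∇w) / |∇w|²`, while `D` collects the derivatives of the cutoff function. -/
theorem quarter_mul_sq_le_of_sq_add_add_le {m θ k P f a D HH : ℝ} (hm : 0 ≤ m) (hθ : 0 < θ)
    (hθ1 : θ ≤ 1) (hkm : k * m ≤ 4 * (1 - θ)) (hP : 0 ≤ P) (hf : 0 ≤ f)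
    (htrace : (P + f + a) ^ 2 ≤ m * HH) (hHH : HH ≤ D + 2 * a * P + k * f * P) :
    θ / 4 * P ^ 2 ≤ (2 + 4 * m ^ 2) / θ * a ^ 2 + m * D := by
  have hyoung : (1 - θ / 2) * (P + f) ^ 2 - 2 / θ * a ^ 2 ≤ (P + f + a) ^ 2 := by
    have hsq : 0 ≤ θ / 2 * (P + f + 2 / θ * a) ^ 2 + a ^ 2 := by positivity
    have hexpand : θ / 2 * (P + f + 2 / θ * a) ^ 2
        = θ / 2 * (P + f) ^ 2 + 2 * (P + f) * a + 2 / θ * a ^ 2 := by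
      field_simp; ring
    linear_combination hsq + hexpand
  have hcross : 2 * m * a * P ≤ θ / 4 * P ^ 2 + 4 * m ^ 2 / θ * a ^ 2 := by
    have hsq : 0 ≤ θ / 4 * (P - 4 * m / θ * a) ^ 2 := by positivity
    have hexpand : θ / 4 * (P - 4 * m / θ * a) ^ 2
        = θ / 4 * P ^ 2 - 2 * m * a * P + 4 * m ^ 2 / θ * a ^ 2 := by
      field_simp; ring
    linear_combination hsq + hexpand
  have hprod : k * m * (f * P) ≤ (1 - θ) * (P + f) ^ 2 :=
    calc k * m * (f * P) ≤ 4 * (1 - θ) * (f * P) := by gcongr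
      _ = (1 - θ) * (4 * P * f) := by ring
      _ ≤ (1 - θ) * (P + f) ^ 2 :=
          mul_le_mul_of_nonneg_left (four_mul_le_sq_add P f) (sub_nonneg.2 hθ1)
  have hPf : θ / 2 * P ^ 2 ≤ θ / 2 * (P + f) ^ 2 := by gcongr; linarith
  have hmHH : m * HH ≤ m * (D + 2 * a * P + k * f * P) := by gcongr
  linear_combination hyoung + htrace + hmHH + hcross + hprod + hPf

theorem sq_mul_le_of_sq_add_add_le {m θ k P f a r G L HH : ℝ} (hm : 0 ≤ m) (hθ : 0 < θ)
    (hθ1 : θ ≤ 1) (hkm : k * m ≤ 4 * (1 - θ)) (hP : 0 < P) (hf : 0 ≤ f) (hr : r ≠ 0)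
    (htrace : (P + f + a) ^ 2 ≤ m * HH)
    (hHH : HH ≤ P * (3 * G - r * L) / r ^ 2 + 2 * a * P + k * f * P)
    (ha : a ^ 2 ≤ P * G / r ^ 2) :
    r ^ 2 * P ≤ 4 / θ * (((2 + 4 * m ^ 2) / θ + 3 * m) * G - m * (r * L)) := by
  have hbound : θ / 4 * P ^ 2
      ≤ P / r ^ 2 * (((2 + 4 * m ^ 2) / θ + 3 * m) * G - m * (r * L)) :=
    calc θ / 4 * P ^ 2
        ≤ (2 + 4 * m ^ 2) / θ * a ^ 2 + m * (P * (3 * G - r * L) / r ^ 2) :=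
          quarter_mul_sq_le_of_sq_add_add_le hm hθ hθ1 hkm hP.le hf htrace hHH
      _ ≤ (2 + 4 * m ^ 2) / θ * (P * G / r ^ 2) + m * (P * (3 * G - r * L) / r ^ 2) := by gcongr
      _ = P / r ^ 2 * (((2 + 4 * m ^ 2) / θ + 3 * m) * G - m * (r * L)) := by ring
  calc r ^ 2 * P = 4 / θ * (r ^ 2 / P * (θ / 4 * P ^ 2)) := by field_simp
    _ ≤ 4 / θ * (r ^ 2 / P
          * (P / r ^ 2 * (((2 + 4 * m ^ 2) / θ + 3 * m) * G - m * (r * L)))) := by gcongr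
    _ = 4 / θ * (((2 + 4 * m ^ 2) / θ + 3 * m) * G - m * (r * L)) := by
        rw [← mul_assoc (r ^ 2 / P), div_mul_div_cancel₀ hP.ne', div_self (pow_ne_zero 2 hr),
          one_mul]

variable {w f ρ : EuclideanSpace ℝ (Fin n) → ℝ} {x₀ : EuclideanSpace ℝ (Fin n)}

theorem mul_gradInner_of_isLocalMax_sq_mul {P : EuclideanSpace ℝ (Fin n) → ℝ}
    (hρ : DifferentiableAt ℝ ρ x₀) (hP : DifferentiableAt ℝ P x₀) (hρ₀ : ρ x₀ ≠ 0)
    (hmax : IsLocalMax (fun x => ρ x ^ 2 * P x) x₀) (f : EuclideanSpace ℝ (Fin n) → ℝ) :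
    ρ x₀ * gradInner f P x₀ = -2 * P x₀ * gradInner f ρ x₀ := by
  simp only [sq] at hmax
  have hcrit := gradInner_eq_zero_of_isLocalMax f hmax
  rw [gradInner_mul_right (hρ.fun_mul hρ) hP, gradInner_mul_right hρ hρ] at hcrit
  refine mul_left_cancel₀ hρ₀ ?_
  linear_combination hcrit

theorem sq_mul_hessSq_add_le_of_isLocalMax (hw : ContDiff ℝ 2 w) (hlap : ContDiff ℝ 1 (lap w))
    (hρ : ContDiff ℝ 2 ρ) (hρ₀ : ρ x₀ ≠ 0)
    (hmax : IsLocalMax (fun x => ρ x ^ 2 * gradInner w w x) x₀) :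
    ρ x₀ ^ 2 * (hessSq w x₀ + gradInner w (lap w) x₀)
      ≤ gradInner w w x₀ * (3 * gradInner ρ ρ x₀ - ρ x₀ * lap ρ x₀) := by
  have hdρ : DifferentiableAt ℝ ρ x₀ := hρ.differentiable two_ne_zero x₀
  have hdP : DifferentiableAt ℝ (gradInner w w) x₀ :=
    (contDiff_gradInner hw hw (m := 1) (by norm_num)).differentiable one_ne_zero x₀
  have hcrit := mul_gradInner_of_isLocalMax_sq_mul hdρ hdP hρ₀ hmax ρ
  simp only [sq (ρ _)] at hmax
  have hbochner := bochnerExpr_nonpos_of_isLocalMax (hρ.mul hρ) hw hlap hmax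
  rw [bochnerExpr, lap_mul hρ hρ, gradInner_comm _ (gradInner w w), gradInner_mul_right hdρ hdρ,
    gradInner_comm (gradInner w w) ρ] at hbochner
  linear_combination hbochner / 2 - 2 * hcrit

theorem gradInner_lap_of_lap_eq (hf : DifferentiableAt ℝ f x₀)
    (hP : DifferentiableAt ℝ (gradInner w w) x₀) (hlap : ∀ x, lap w x = -gradInner w w x - f x) :
    gradInner w (lap w) x₀ = -gradInner w (gradInner w w) x₀ - gradInner w f x₀ := by
  have hlap_fun : lap w = fun x => -1 * gradInner w w x - f x :=
    funext fun x => by rw [hlap, neg_one_mul]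
  rw [hlap_fun, gradInner_sub_right (hP.const_mul _) hf, gradInner_const_mul_right _ hP,
    neg_one_mul]

theorem hessSq_le_of_isLocalMax (hw : ContDiff ℝ 2 w) (hf : ContDiff ℝ 1 f)
    (hlap : ∀ x, lap w x = -gradInner w w x - f x) (hρ : ContDiff ℝ 2 ρ) (hρ₀ : ρ x₀ ≠ 0)
    (hmax : IsLocalMax (fun x => ρ x ^ 2 * gradInner w w x) x₀) :
    hessSq w x₀ ≤ gradInner w w x₀ * (3 * gradInner ρ ρ x₀ - ρ x₀ * lap ρ x₀) / ρ x₀ ^ 2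
      + gradInner w (gradInner w w) x₀ + gradInner w f x₀ := by
  have hP : ContDiff ℝ 1 (gradInner w w) := contDiff_gradInner hw hw (by norm_num)
  have hlap1 : ContDiff ℝ 1 (lap w) := funext hlap ▸ hP.neg.sub hf
  have hbochner := sq_mul_hessSq_add_le_of_isLocalMax hw hlap1 hρ hρ₀ hmax
  rw [mul_comm, ← le_div_iff₀ (by positivity), gradInner_lap_of_lap_eq
    (hf.differentiable one_ne_zero x₀) (hP.differentiable one_ne_zero x₀) hlap] at hbochner
  linarith

theorem sq_mul_gradInner_le_of_isLocalMax {k θ : ℝ} (hw : ContDiff ℝ 2 w) (hf : ContDiff ℝ 1 f)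
    (hlap : ∀ x, lap w x = -gradInner w w x - f x) (hρ : ContDiff ℝ 2 ρ) (hρ₀ : ρ x₀ ≠ 0)
    (hmax : IsLocalMax (fun x => ρ x ^ 2 * gradInner w w x) x₀) (hP : 0 < gradInner w w x₀)
    (hf₀ : 0 ≤ f x₀) (hwf : gradInner w f x₀ ≤ k * f x₀ * gradInner w w x₀)
    (hθ : 0 < θ) (hθ1 : θ ≤ 1) (hk : k * (n - 1) ≤ 4 * (1 - θ)) :
    ρ x₀ ^ 2 * gradInner w w x₀
      ≤ 4 / θ * (((2 + 4 * (n - 1) ^ 2) / θ + 3 * (n - 1)) * gradInner ρ ρ x₀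
        - (n - 1) * (ρ x₀ * lap ρ x₀)) := by
  let P := gradInner w w x₀
  let m : ℝ := n - 1
  let a := gradInner w (gradInner w w) x₀ / (2 * P)
  have hm : 0 ≤ m := sub_nonneg.2 (one_le_of_gradInner_self_pos hP)
  have haP : gradInner w (gradInner w w) x₀ = 2 * a * P := by
    simp only [a, P]
    field_simp
  have htrace : (P + f x₀ + a) ^ 2 ≤ m * hessSq w x₀ := by
    have hsq := sq_lap_sub_le_mul_hessSq hw hP.ne'
    rw [hlap] at hsq
    linear_combination hsq
  have hHH : hessSq w x₀ ≤ P * (3 * gradInner ρ ρ x₀ - ρ x₀ * lap ρ x₀) / ρ x₀ ^ 2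
      + 2 * a * P + k * f x₀ * P := by
    have hhess := hessSq_le_of_isLocalMax hw hf hlap hρ hρ₀ hmax
    rw [haP] at hhess
    exact hhess.trans (by gcongr)
  have ha : a = -(gradInner w ρ x₀ / ρ x₀) := by
    have hdP : DifferentiableAt ℝ (gradInner w w) x₀ :=
      (contDiff_gradInner hw hw (m := 1) (by norm_num)).differentiable one_ne_zero x₀
    have hcrit :=
      mul_gradInner_of_isLocalMax_sq_mul (hρ.differentiable two_ne_zero x₀) hdP hρ₀ hmax w
    simp only [a, P]
    field_simp
    linear_combination hcrit
  have ha_sq : a ^ 2 ≤ P * gradInner ρ ρ x₀ / ρ x₀ ^ 2 := by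
    rw [ha, neg_sq, div_pow]
    gcongr
    exact gradInner_sq_le w ρ x₀
  exact sq_mul_le_of_sq_add_add_le hm hθ hθ1 hk hP hf₀ hρ₀ htrace hHH ha_sq

end GradientEstimate

section Cutoff

/-- The cutoff function `R² - |x - c|²` of the gradient estimate on the ball of radius `R` around
`c`. It is negative, rather than zero, off the closed ball: the maxima in question are interior. -/
noncomputable def cutoff (c : EuclideanSpace ℝ (Fin n)) (R : ℝ)
    (x : EuclideanSpace ℝ (Fin n)) : ℝ :=
  R ^ 2 - ‖x - c‖ ^ 2

variable {c x : EuclideanSpace ℝ (Fin n)} {R : ℝ}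

theorem contDiff_cutoff {k : WithTop ℕ∞} (c : EuclideanSpace ℝ (Fin n)) (R : ℝ) :
    ContDiff ℝ k (cutoff c R) :=
  contDiff_const.sub (contDiff_norm_sub_sq c)

theorem cutoff_self (c : EuclideanSpace ℝ (Fin n)) (R : ℝ) : cutoff c R c = R ^ 2 := by
  simp [cutoff]

theorem cutoff_pos_iff (hR : 0 ≤ R) : 0 < cutoff c R x ↔ x ∈ Metric.ball c R := by
  rw [cutoff, sub_pos, sq_lt_sq₀ (norm_nonneg _) hR, mem_ball_iff_norm]

theorem partialDeriv_cutoff (c : EuclideanSpace ℝ (Fin n)) (R : ℝ) (i : Fin n) :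
    partialDeriv i (cutoff c R) = fun x => -partialDeriv i (fun y => ‖y - c‖ ^ 2) x :=
  funext fun x => by
    unfold cutoff
    rw [partialDeriv_sub (differentiableAt_const _)
      ((contDiff_norm_sub_sq c).differentiable one_ne_zero x), partialDeriv_const, zero_sub]

theorem gradInner_cutoff_self_le (h : 0 < cutoff c R x) :
    gradInner (cutoff c R) (cutoff c R) x ≤ 4 * R ^ 2 := by
  have hgrad : gradInner (cutoff c R) (cutoff c R) x = 4 * ‖x - c‖ ^ 2 := by
    rw [← gradInner_norm_sub_sq_self]
    simp only [gradInner, partialDeriv_cutoff, neg_mul_neg]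
  rw [cutoff, sub_pos] at h
  linarith

theorem lap_cutoff (c : EuclideanSpace ℝ (Fin n)) (R : ℝ) (x : EuclideanSpace ℝ (Fin n)) :
    lap (cutoff c R) x = -(2 * n) := by
  have hconst : lap (fun _ : EuclideanSpace ℝ (Fin n) => R ^ 2) x = 0 := by simp [lap]
  unfold cutoff
  rw [lap_sub contDiff_const (contDiff_norm_sub_sq c), hconst, lap_norm_sub_sq, zero_sub]

theorem exists_isLocalMax_cutoff_sq_mul {M : EuclideanSpace ℝ (Fin n) → ℝ} (hM : Continuous M)
    (hR : 0 < R) (hc : 0 < M c) :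
    ∃ x₀, 0 < cutoff c R x₀ ∧ IsLocalMax (fun x => cutoff c R x ^ 2 * M x) x₀ ∧
      (R ^ 2) ^ 2 * M c ≤ cutoff c R x₀ ^ 2 * M x₀ := by
  have hcont : Continuous fun x => cutoff c R x ^ 2 * M x :=
    ((contDiff_cutoff (k := 0) c R).continuous.pow 2).mul hM
  obtain ⟨x₀, hx₀, hmax⟩ := (isCompact_closedBall c R).exists_isMaxOn
    (Metric.nonempty_closedBall.2 hR.le) hcont.continuousOn
  have hval : (R ^ 2) ^ 2 * M c ≤ cutoff c R x₀ ^ 2 * M x₀ := by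
    simpa only [cutoff_self] using isMaxOn_iff.1 hmax c (Metric.mem_closedBall_self hR.le)
  have hball : x₀ ∈ Metric.ball c R := by
    refine Metric.mem_ball.2 (lt_of_le_of_ne (Metric.mem_closedBall.1 hx₀) fun hdist => ?_)
    have hzero : cutoff c R x₀ = 0 := by rw [cutoff, ← dist_eq_norm, hdist, sub_self]
    rw [hzero, zero_pow two_ne_zero, zero_mul] at hval
    exact hval.not_gt (by positivity)
  exact ⟨x₀, (cutoff_pos_iff hR.le).2 hball, hmax.isLocalMax
    (mem_of_superset (Metric.isOpen_ball.mem_nhds hball) Metric.ball_subset_closedBall), hval⟩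

theorem nonpos_of_forall_cutoff_sq_mul_le {M : EuclideanSpace ℝ (Fin n) → ℝ} (hM : Continuous M)
    {C : ℝ} (hbound : ∀ c R x₀, 0 < cutoff c R x₀ → 0 < M x₀ →
      IsLocalMax (fun x => cutoff c R x ^ 2 * M x) x₀ → cutoff c R x₀ ^ 2 * M x₀ ≤ C * R ^ 2)
    (c : EuclideanSpace ℝ (Fin n)) : M c ≤ 0 := by
  by_contra! hc
  have hle {R : ℝ} (hR : 0 < R) : R ^ 2 * M c ≤ C := by
    obtain ⟨x₀, hρ, hmax, hval⟩ := exists_isLocalMax_cutoff_sq_mul hM hR hc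
    have hpos : 0 < cutoff c R x₀ ^ 2 * M x₀ := lt_of_lt_of_le (by positivity) hval
    have hx₀ := hval.trans (hbound c R x₀ hρ ((pos_iff_pos_of_mul_pos hpos).1 (by positivity)) hmax)
    exact le_of_mul_le_mul_right (by linarith) (pow_pos hR 2)
  have hlim : Tendsto (fun R : ℝ => R ^ 2 * M c) atTop atTop :=
    (tendsto_pow_atTop two_ne_zero).atTop_mul_const hc
  obtain ⟨R, hlt, hR⟩ := ((hlim.eventually_gt_atTop C).and (eventually_gt_atTop 0)).exists
  exact hlt.not_ge (hle hR)

/-- The constant in the gradient estimate `ρ² |∇w|² ≤ gradConst n θ * R²`, valid at a maximum of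
`ρ² |∇w|²` for `ρ = cutoff c R`; the parameter `θ` measures the distance to the critical growth. -/
noncomputable def gradConst (n : ℕ) (θ : ℝ) : ℝ :=
  4 / θ * (((2 + 4 * ((n : ℝ) - 1) ^ 2) / θ + 3 * ((n : ℝ) - 1)) * 4
    + ((n : ℝ) - 1) * (2 * n))

theorem cutoff_sq_mul_gradInner_le_of_isLocalMax {w f : EuclideanSpace ℝ (Fin n) → ℝ} {k θ : ℝ}
    (hw : ContDiff ℝ 2 w) (hf : ContDiff ℝ 1 f) (hlap : ∀ x, lap w x = -gradInner w w x - f x)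
    (hρ : 0 < cutoff c R x) (hmax : IsLocalMax (fun y => cutoff c R y ^ 2 * gradInner w w y) x)
    (hP : 0 < gradInner w w x) (hf₀ : 0 ≤ f x)
    (hwf : gradInner w f x ≤ k * f x * gradInner w w x)
    (hθ : 0 < θ) (hθ1 : θ ≤ 1) (hk : k * (n - 1) ≤ 4 * (1 - θ)) :
    cutoff c R x ^ 2 * gradInner w w x ≤ gradConst n θ * R ^ 2 := by
  have hn : (0 : ℝ) ≤ n - 1 := sub_nonneg.2 (one_le_of_gradInner_self_pos hP)
  have hρR : cutoff c R x ≤ R ^ 2 := sub_le_self _ (sq_nonneg _)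
  have hbound := sq_mul_gradInner_le_of_isLocalMax hw hf hlap (contDiff_cutoff c R) hρ.ne' hmax hP
    hf₀ hwf hθ hθ1 hk
  rw [lap_cutoff, mul_neg, mul_neg, sub_neg_eq_add] at hbound
  calc cutoff c R x ^ 2 * gradInner w w x
      ≤ 4 / θ * (((2 + 4 * ((n : ℝ) - 1) ^ 2) / θ + 3 * ((n : ℝ) - 1))
          * gradInner (cutoff c R) (cutoff c R) x
        + ((n : ℝ) - 1) * (cutoff c R x * (2 * n))) := hbound
    _ ≤ 4 / θ * (((2 + 4 * ((n : ℝ) - 1) ^ 2) / θ + 3 * ((n : ℝ) - 1)) * (4 * R ^ 2)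
        + ((n : ℝ) - 1) * (R ^ 2 * (2 * n))) := by
      gcongr
      exact gradInner_cutoff_self_le hρ
    _ = gradConst n θ * R ^ 2 := by
      rw [gradConst]
      ring

end Cutoff

section LogSystem

variable {u v w z : EuclideanSpace ℝ (Fin n) → ℝ} {x₀ c : EuclideanSpace ℝ (Fin n)}
  {p q θ R : ℝ}

/-- The equation `-Δu = v ^ p` for positive `u` and `v`, written in terms of `w = log u` and
`z = log v`. -/
def LogLaneEmden (p : ℝ) (w z : EuclideanSpace ℝ (Fin n) → ℝ) : Prop :=
  ∀ x, lap w x = -gradInner w w x - exp (p * z x - w x)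

theorem lap_log (hu : ContDiff ℝ 2 u) (hu₀ : ∀ x, 0 < u x) (x : EuclideanSpace ℝ (Fin n)) :
    lap (fun y => log (u y)) x
      = lap u x / u x - gradInner (fun y => log (u y)) (fun y => log (u y)) x := by
  have hdu := hu.differentiable two_ne_zero
  have hlog (i : Fin n) (y : EuclideanSpace ℝ (Fin n)) :
      partialDeriv i (fun y => log (u y)) y = (u y)⁻¹ * partialDeriv i u y :=
    partialDeriv_comp (hasDerivAt_log (hu₀ y).ne') (hdu y) i
  have hinv (i : Fin n) :
      partialDeriv i (fun y => (u y)⁻¹) x = -(u x ^ 2)⁻¹ * partialDeriv i u x :=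
    partialDeriv_comp (hasDerivAt_inv (hu₀ x).ne') (hdu x) i
  simp only [lap_eq_sum_partialDeriv, gradInner, Finset.sum_div, ← Finset.sum_sub_distrib]
  refine Finset.sum_congr rfl fun i _ => ?_
  rw [funext (hlog i), partialDeriv_mul ((hdu x).fun_inv (hu₀ x).ne')
    (differentiable_partialDeriv hu i x), hinv]
  have := (hu₀ x).ne'
  field_simp
  ring

theorem logLaneEmden_log (hu : ContDiff ℝ 2 u) (hu₀ : ∀ x, 0 < u x) (hv₀ : ∀ x, 0 < v x)
    (heq : ∀ x, -lap u x = v x ^ p) :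
    LogLaneEmden p (fun x => log (u x)) (fun x => log (v x)) := fun x => by
  rw [lap_log hu hu₀, exp_sub, exp_log (hu₀ x), mul_comm p, ← rpow_def_of_pos (hv₀ x), ← heq x]
  ring

theorem gradInner_exp_sub (hw : ContDiff ℝ 2 w) (hz : ContDiff ℝ 2 z) (p : ℝ)
    (x : EuclideanSpace ℝ (Fin n)) :
    gradInner w (fun y => exp (p * z y - w y)) x
      = exp (p * z x - w x) * (p * gradInner w z x - gradInner w w x) := by
  have hdw := hw.differentiable two_ne_zero x
  have hdz := hz.differentiable two_ne_zero x
  rw [gradInner_comp_right (hasDerivAt_exp _) ((hdz.const_mul p).fun_sub hdw),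
    gradInner_sub_right (hdz.const_mul p) hdw, gradInner_const_mul_right p hdz]

theorem mul_gradInner_le_sqrt_mul (hp : 0 ≤ p)
    (hdom : p * gradInner z z x₀ ≤ q * gradInner w w x₀) :
    p * gradInner w z x₀ ≤ √(p * q) * gradInner w w x₀ := by
  have hP := gradInner_self_nonneg w x₀
  rw [← sqrt_sq hP, ← sqrt_mul' _ (sq_nonneg _)]
  refine le_sqrt_of_sq_le ?_
  calc (p * gradInner w z x₀) ^ 2
      = p * (p * gradInner w z x₀ ^ 2) := by ring
    _ ≤ p * (p * (gradInner w w x₀ * gradInner z z x₀)) := by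
      gcongr
      exact gradInner_sq_le w z x₀
    _ = p * gradInner w w x₀ * (p * gradInner z z x₀) := by ring
    _ ≤ p * gradInner w w x₀ * (q * gradInner w w x₀) := by gcongr
    _ = p * q * gradInner w w x₀ ^ 2 := by ring

theorem LogLaneEmden.cutoff_sq_mul_gradInner_le (h : LogLaneEmden p w z) (hw : ContDiff ℝ 2 w)
    (hz : ContDiff ℝ 2 z) (hp : 0 ≤ p) (hθ : 0 < θ) (hθ1 : θ ≤ 1)
    (hpq : (√(p * q) - 1) * (n - 1) ≤ 4 * (1 - θ)) (hρ : 0 < cutoff c R x₀)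
    (hP : 0 < gradInner w w x₀) (hdom : p * gradInner z z x₀ ≤ q * gradInner w w x₀)
    (hmax : IsLocalMax (fun x => cutoff c R x ^ 2 * gradInner w w x) x₀) :
    cutoff c R x₀ ^ 2 * gradInner w w x₀ ≤ gradConst n θ * R ^ 2 := by
  have hsource : ContDiff ℝ 2 fun x => exp (p * z x - w x) :=
    ((contDiff_const.mul hz).sub hw).exp
  refine cutoff_sq_mul_gradInner_le_of_isLocalMax hw (hsource.of_le one_le_two) h hρ hmax hP
    (exp_pos _).le ?_ hθ hθ1 hpq
  calc gradInner w (fun y => exp (p * z y - w y)) x₀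
      = exp (p * z x₀ - w x₀) * (p * gradInner w z x₀ - gradInner w w x₀) :=
        gradInner_exp_sub hw hz p x₀
    _ ≤ exp (p * z x₀ - w x₀) * (√(p * q) * gradInner w w x₀ - gradInner w w x₀) := by
      gcongr exp _ * (?_ - _)
      exact mul_gradInner_le_sqrt_mul hp hdom
    _ = (√(p * q) - 1) * exp (p * z x₀ - w x₀) * gradInner w w x₀ := by ring

theorem isLocalMax_mul_of_isLocalMax_mul_max {X : Type*} [TopologicalSpace X] {a f g : X → ℝ}
    {x : X} {r s : ℝ} (ha : ∀ y, 0 ≤ a y) (hr : 0 < r) (hle : s * g x ≤ r * f x)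
    (hmax : IsLocalMax (fun y => a y * max (r * f y) (s * g y)) x) :
    IsLocalMax (fun y => a y * f y) x := by
  filter_upwards [hmax] with y hy
  refine le_of_mul_le_mul_left ?_ hr
  calc r * (a y * f y) = a y * (r * f y) := by ring
    _ ≤ a y * max (r * f y) (s * g y) := mul_le_mul_of_nonneg_left (le_max_left _ _) (ha y)
    _ ≤ a x * max (r * f x) (s * g x) := hy
    _ = r * (a x * f x) := by rw [max_eq_left hle]; ring

theorem LogLaneEmden.cutoff_sq_mul_max_le (h : LogLaneEmden p w z) (hw : ContDiff ℝ 2 w)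
    (hz : ContDiff ℝ 2 z) (hp : 0 ≤ p) (hq : 0 < q) (hθ : 0 < θ) (hθ1 : θ ≤ 1)
    (hpq : (√(p * q) - 1) * (n - 1) ≤ 4 * (1 - θ)) (hρ : 0 < cutoff c R x₀)
    (hpos : 0 < max (q * gradInner w w x₀) (p * gradInner z z x₀))
    (hdom : p * gradInner z z x₀ ≤ q * gradInner w w x₀)
    (hmax : IsLocalMax
      (fun x => cutoff c R x ^ 2 * max (q * gradInner w w x) (p * gradInner z z x)) x₀) :
    cutoff c R x₀ ^ 2 * max (q * gradInner w w x₀) (p * gradInner z z x₀)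
      ≤ q * (gradConst n θ * R ^ 2) := by
  rw [max_eq_left hdom] at hpos ⊢
  rw [mul_left_comm]
  refine mul_le_mul_of_nonneg_left ?_ hq.le
  exact h.cutoff_sq_mul_gradInner_le hw hz hp hθ hθ1 hpq hρ (pos_of_mul_pos_right hpos hq.le) hdom
    (isLocalMax_mul_of_isLocalMax_mul_max (fun _ => sq_nonneg _) hq hdom hmax)

theorem exists_theta_of_mul_sq_lt (hp : 0 ≤ p) (hq : 0 ≤ q) {x : ℝ} (hx : 0 ≤ x + 3)
    (h : p * q * (x - 1) ^ 2 < (x + 3) ^ 2) :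
    ∃ θ, 0 < θ ∧ θ ≤ 1 ∧ (√(p * q) - 1) * (x - 1) ≤ 4 * (1 - θ) := by
  have hlt : √(p * q) * (x - 1) < x + 3 := by
    refine lt_of_pow_lt_pow_left₀ 2 hx ?_
    rwa [mul_pow, sq_sqrt (mul_nonneg hp hq)]
  refine ⟨min 1 (1 - (√(p * q) - 1) * (x - 1) / 4), lt_min one_pos (by linarith),
    min_le_left _ _, ?_⟩
  linarith [min_le_right 1 (1 - (√(p * q) - 1) * (x - 1) / 4)]

theorem gradInner_self_eq_zero_of_logLaneEmden (hw : ContDiff ℝ 2 w) (hz : ContDiff ℝ 2 z)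
    (hwz : LogLaneEmden p w z) (hzw : LogLaneEmden q z w) (hp : 0 < p) (hq : 0 < q)
    (hpq : p * q * ((n : ℝ) - 1) ^ 2 < ((n : ℝ) + 3) ^ 2) (x : EuclideanSpace ℝ (Fin n)) :
    gradInner w w x = 0 := by
  obtain ⟨θ, hθ, hθ1, hθpq⟩ := exists_theta_of_mul_sq_lt hp.le hq.le (by positivity) hpq
  let M (x : EuclideanSpace ℝ (Fin n)) : ℝ := max (q * gradInner w w x) (p * gradInner z z x)
  have hM : Continuous M :=
    (continuous_const.mul (contDiff_gradInner (m := 0) hw hw (by norm_num)).continuous).max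
      (continuous_const.mul (contDiff_gradInner (m := 0) hz hz (by norm_num)).continuous)
  have hbound (c : EuclideanSpace ℝ (Fin n)) (R : ℝ) (x₀ : EuclideanSpace ℝ (Fin n))
      (hρ : 0 < cutoff c R x₀) (hpos : 0 < M x₀)
      (hmax : IsLocalMax (fun x => cutoff c R x ^ 2 * M x) x₀) :
      cutoff c R x₀ ^ 2 * M x₀ ≤ max q p * |gradConst n θ| * R ^ 2 := by
    have hconst {r : ℝ} (hr : 0 < r) (hrmax : r ≤ max q p) :
        r * (gradConst n θ * R ^ 2) ≤ max q p * |gradConst n θ| * R ^ 2 := by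
      rw [mul_assoc]
      exact mul_le_mul_of_nonneg hrmax (by gcongr; exact le_abs_self _) hr.le (by positivity)
    rcases le_total (p * gradInner z z x₀) (q * gradInner w w x₀) with hdom | hdom
    · exact (hwz.cutoff_sq_mul_max_le hw hz hp.le hq hθ hθ1 hθpq hρ hpos hdom hmax).trans
        (hconst hq (le_max_left _ _))
    · simp only [M, max_comm (q * _)] at hpos hmax ⊢
      rw [mul_comm p q] at hθpq
      exact (hzw.cutoff_sq_mul_max_le hz hw hq.le hp hθ hθ1 hθpq hρ hpos hdom hmax).trans
        (hconst hp (le_max_right _ _))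
  have hle : q * gradInner w w x ≤ 0 :=
    (le_max_left _ _).trans (nonpos_of_forall_cutoff_sq_mul_le hM hbound x)
  exact (nonpos_of_mul_nonpos_right hle hq).antisymm (gradInner_self_nonneg w x)

theorem LogLaneEmden.exists_gradInner_self_ne_zero (h : LogLaneEmden p w z) :
    ∃ x, gradInner w w x ≠ 0 := by
  by_contra! hgrad
  have hpartial (i : Fin n) : partialDeriv i w = fun _ => 0 :=
    funext fun x => partialDeriv_eq_zero_of_gradInner_self_eq_zero (hgrad x) i
  have hlap : lap w 0 = 0 := by
    simp only [lap_eq_sum_partialDeriv, hpartial, partialDeriv_const, Finset.sum_const_zero]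
  have hsource := h 0
  rw [hlap, hgrad, neg_zero, zero_sub, eq_comm, neg_eq_zero] at hsource
  exact (exp_pos _).ne' hsource

end LogSystem

section Hyperbola

variable {c₀ x p q : ℝ}

theorem mul_mul_le_of_hyperbola (hx : 0 < x) (hc : c₀ ≤ 2 * x) (hp : 1 ≤ p) (hq : 1 ≤ q)
    (h : 1 - 2 / x + c₀ / x ^ 2 ≤ 1 / (p + 1) + 1 / (q + 1)) :
    p * q * (x ^ 2 - 4 * x + 2 * c₀) ≤ x ^ 2 + 4 * x - 2 * c₀ := by
  have hprod : (p + 1) * (q + 1) ≤ 2 * (p * q + 1) := by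
    linarith [mul_nonneg (sub_nonneg.2 hp) (sub_nonneg.2 hq)]
  have hcleared : (p * q - 1) * x ^ 2 ≤ (2 * x - c₀) * ((p + 1) * (q + 1)) := by
    have hleft : 1 - 2 / x + c₀ / x ^ 2 = (x ^ 2 - 2 * x + c₀) / x ^ 2 := by field_simp
    have hright : 1 / (p + 1) + 1 / (q + 1) = (p + q + 2) / ((p + 1) * (q + 1)) := by
      field_simp
      ring
    rw [hleft, hright, div_le_div_iff₀ (by positivity) (by positivity)] at h
    linarith
  linarith [mul_le_mul_of_nonneg_left hprod (sub_nonneg.2 hc)]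

theorem mul_sq_lt_of_hyperbola (hc₀ : 2 < c₀) (hcx : c₀ ≤ x) (hx : 6 ≤ (c₀ - 2) * x)
    (hp : 1 ≤ p) (hq : 1 ≤ q) (h : 1 - 2 / x + c₀ / x ^ 2 ≤ 1 / (p + 1) + 1 / (q + 1)) :
    p * q * (x - 1) ^ 2 < (x + 3) ^ 2 := by
  have hx0 : 0 < x := by linarith
  have hden : 0 < x ^ 2 - 4 * x + 2 * c₀ := by linarith [sq_nonneg (x - 2)]
  have hgap : (x ^ 2 + 4 * x - 2 * c₀) * (x - 1) ^ 2 < (x + 3) ^ 2 * (x ^ 2 - 4 * x + 2 * c₀) := by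
    have hdiff : (x + 3) ^ 2 * (x ^ 2 - 4 * x + 2 * c₀)
        - (x ^ 2 + 4 * x - 2 * c₀) * (x - 1) ^ 2
        = 4 * (((c₀ - 2) * x - 6) * x + (2 * (c₀ - 2) * x + 5 * c₀)) := by ring
    have hpos : 0 < (c₀ - 2) * x := by linarith
    have hlead : 0 ≤ ((c₀ - 2) * x - 6) * x := mul_nonneg (sub_nonneg.2 hx) hx0.le
    linarith [hdiff, hpos]
  refine lt_of_mul_lt_mul_right ?_ hden.le
  calc p * q * (x - 1) ^ 2 * (x ^ 2 - 4 * x + 2 * c₀)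
      = p * q * (x ^ 2 - 4 * x + 2 * c₀) * (x - 1) ^ 2 := by ring
    _ ≤ (x ^ 2 + 4 * x - 2 * c₀) * (x - 1) ^ 2 := by
      gcongr
      exact mul_mul_le_of_hyperbola hx0 (by linarith) hp hq h
    _ < (x + 3) ^ 2 * (x ^ 2 - 4 * x + 2 * c₀) := hgap

theorem exists_forall_mul_sq_lt_of_hyperbola (hc₀ : 2 < c₀) :
    ∃ N : ℕ, ∀ n : ℕ, N ≤ n → ∀ p q : ℝ, 1 ≤ p → 1 ≤ q →
      1 - 2 / (n : ℝ) + c₀ / (n : ℝ) ^ 2 ≤ 1 / (p + 1) + 1 / (q + 1) →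
      p * q * ((n : ℝ) - 1) ^ 2 < ((n : ℝ) + 3) ^ 2 := by
  obtain ⟨N, hN⟩ := exists_nat_ge (max (6 / (c₀ - 2)) c₀)
  refine ⟨N, fun n hn p q hp hq => mul_sq_lt_of_hyperbola hc₀ ?_ ?_ hp hq⟩
  · exact (le_max_right _ _).trans (hN.trans (by exact_mod_cast hn))
  · rw [← div_le_iff₀' (sub_pos.2 hc₀)]
    exact (le_max_left _ _).trans (hN.trans (by exact_mod_cast hn))

end Hyperbola

end LaneEmden

theorem laneEmden_conjecture_large_dimension_general {n : ℕ} {p q : ℝ} (hp : 0 < p) (hq : 0 < q)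
    (hpq : p * q * ((n : ℝ) - 1) ^ 2 < ((n : ℝ) + 3) ^ 2) :
    ¬ ∃ u v : EuclideanSpace ℝ (Fin n) → ℝ,
        ContDiff ℝ 2 u ∧ ContDiff ℝ 2 v ∧
        (∀ x, 0 < u x) ∧ (∀ x, 0 < v x) ∧
        (∀ x, -lap u x = v x ^ p) ∧ (∀ x, -lap v x = u x ^ q) := by
  rintro ⟨u, v, hu, hv, hu₀, hv₀, hequ, heqv⟩
  have hwz := LaneEmden.logLaneEmden_log hu hu₀ hv₀ hequ
  have hzw := LaneEmden.logLaneEmden_log hv hv₀ hu₀ heqv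
  obtain ⟨x, hx⟩ := hwz.exists_gradInner_self_ne_zero
  exact hx (LaneEmden.gradInner_self_eq_zero_of_logLaneEmden (hu.log fun x => (hu₀ x).ne')
    (hv.log fun x => (hv₀ x).ne') hwz hzw hp hq hpq x)

theorem laneEmden_conjecture_large_dimension (c₀ : ℝ) (hc₀ : 2 < c₀) :
    ∃ N : ℕ, ∀ n : ℕ, N ≤ n → ∀ p q : ℝ, 1 ≤ p → 1 ≤ q →
      1 - 2 / (n : ℝ) + c₀ / (n : ℝ) ^ 2 ≤ 1 / (p + 1) + 1 / (q + 1) →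
      ¬ ∃ u v : EuclideanSpace ℝ (Fin n) → ℝ,
          ContDiff ℝ 2 u ∧ ContDiff ℝ 2 v ∧
          (∀ x, 0 < u x) ∧ (∀ x, 0 < v x) ∧
          (∀ x, -lap u x = v x ^ p) ∧ (∀ x, -lap v x = u x ^ q) := by
  obtain ⟨N, hN⟩ := LaneEmden.exists_forall_mul_sq_lt_of_hyperbola hc₀
  exact ⟨N, fun n hn p q hp hq hhyp => laneEmden_conjecture_large_dimension_general
    (one_pos.trans_le hp) (one_pos.trans_le hq) (hN n hn p q hp hq hhyp)⟩
end
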